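/- arXiv:1411.6946 — 2 statements merged into one kernel-verified Lean document; each statement's English description precedes it below -/
import Mathlib

section
/- For z ≠ 0 the periodic Green's function satisfies G(z,t) = (1/2π) log r − (1/2π) Σ_{m∈ℤ, m≠0} K₀(|m| r) e^{imt}, where K₀ is the second modified Bessel function; consequently there exists C > 0 such that |∇^k(G(z,t) − (1/2π) log r)| ≤ C e^{−r} for all r ≥ 2 and k = 0, 1, 2. -/
open Real Filter

noncomputable section

/-- ℝ³ = ℝ² × ℝ, the universal cover of ℝ² × S¹; coordinates `(z, t)` with `r = |z|`. -/
abbrev E3 := EuclideanSpace ℝ (Fin 3)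

/-- The regularising constants `a_{|m|}`. -/
def aCoeff (m : ℤ) : ℝ :=
  if m = 0 then 2 * (Real.log (4 * Real.pi) - Real.eulerMascheroniConstant) / (2 * Real.pi)
  else 1 / (2 * |(m : ℝ)| * Real.pi)

/-- The `m`-th summand of the series defining the Green's function. -/
def gTerm (m : ℤ) (x : E3) : ℝ :=
  -(1 / 2) * (1 / Real.sqrt ((x 0) ^ 2 + (x 1) ^ 2 + (x 2 - 2 * m * Real.pi) ^ 2) - aCoeff m)

/-- The singular points `(0, 2kπ)`. -/
def singPt (k : ℤ) : E3 := (2 * k * Real.pi) • EuclideanSpace.single (2 : Fin 3) (1 : ℝ)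

/-- `r = |z|`, the distance from the axis. -/
def radius (x : E3) : ℝ := Real.sqrt ((x 0) ^ 2 + (x 1) ^ 2)

/-- The modified Bessel function of the second kind of order `0`,
`K₀(x) = ∫₀^∞ e^{−x cosh t} dt`. -/
def besselK0 (x : ℝ) : ℝ := ∫ t in Set.Ioi (0 : ℝ), Real.exp (-x * Real.cosh t)

open MeasureTheory Topology

lemma hasSum_inv_sq_add_sq {w : ℝ} (hw : 0 < w) (t : ℝ) :
    HasSum (fun m : ℤ => 1 / (w ^ 2 + (t - 2 * m * π) ^ 2))
      ((1 / w) * (1 / 2 + ∑' n : ℕ, Real.exp (-((n + 1) * w)) * Real.cos ((n + 1) * t))) := by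
  have hpi := Real.pi_pos
  set k : ℤ → ℝ := fun m => 1 / (w ^ 2 + (t - 2 * m * π) ^ 2) with hk
  have hx : 0 < (((t : ℂ) + w * Complex.I) / (2 * π)).im := by
    rw [show ((t : ℂ) + w * Complex.I) / (2 * π) = ((t / (2 * π) : ℝ) : ℂ)
      + ((w / (2 * π) : ℝ) : ℂ) * Complex.I by push_cast; ring]
    rw [Complex.add_im, Complex.ofReal_im, Complex.im_ofReal_mul, Complex.I_im]
    positivity
  set x : UpperHalfPlane := ⟨_, hx⟩ with hxdef
  have hxc : (x : ℂ) = ((t / (2 * π) : ℝ) : ℂ) + ((w / (2 * π) : ℝ) : ℂ) * Complex.I := by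
    change ((t : ℂ) + w * Complex.I) / (2 * π) = _
    push_cast; ring
  have him (m : ℤ) : (1 / ((x : ℂ) - m)).im = -(2 * π * w) * k m := by
    have hd : w ^ 2 + (t - 2 * m * π) ^ 2 ≠ 0 := by positivity
    rw [hxc, one_div, Complex.inv_im, Complex.normSq_apply]
    have e1 : (((t / (2 * π) : ℝ) : ℂ) + ((w / (2 * π) : ℝ) : ℂ) * Complex.I - m).re
        = (t - 2 * m * π) / (2 * π) := by
      rw [Complex.sub_re, Complex.add_re, Complex.ofReal_re, Complex.re_ofReal_mul, Complex.I_re,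
        Complex.intCast_re]
      field_simp
      ring
    have e2 : (((t / (2 * π) : ℝ) : ℂ) + ((w / (2 * π) : ℝ) : ℂ) * Complex.I - m).im
        = w / (2 * π) := by
      rw [Complex.sub_im, Complex.add_im, Complex.ofReal_im, Complex.im_ofReal_mul, Complex.I_im,
        Complex.intCast_im]
      ring
    rw [e1, e2]
    have e3 : (t - 2 * m * π) / (2 * π) * ((t - 2 * m * π) / (2 * π)) + w / (2 * π) * (w / (2 * π))
        = (w ^ 2 + (t - 2 * m * π) ^ 2) / (2 * π) ^ 2 := by ring
    rw [e3]
    simp only [hk]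
    field_simp
  have hxZ : (x : ℂ) ∈ Complex.integerComplement :=
    UpperHalfPlane.coe_mem_integerComplement x
  have hcot := cot_series_rep' hxZ
  rw [pi_mul_cot_pi_q_exp] at hcot
  have hsum := (Complex.hasSum_im (summable_cotTerm hxZ).hasSum)
  have hterm (n : ℕ) : (cotTerm x n).im = -(2 * π * w) * (k (n + 1) + k (-(n + 1))) := by
    have h1 := him (n + 1)
    have h2 := him (-(n + 1))
    push_cast at h1 h2
    rw [mul_add, ← h1, ← h2, ← Complex.add_im, sub_neg_eq_add]
  simp_rw [hterm] at hsum
  have hc : -(2 * π * w) ≠ 0 := by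
    have : 0 < 2 * π * w := by positivity
    linarith
  have hs : Summable fun n : ℕ => k (n + 1) + k (-(n + 1)) :=
    (summable_mul_left_iff hc).1 hsum.summable
  have hk0 (m : ℤ) : 0 ≤ k m := by simp only [hk]; positivity
  have hs1 : Summable fun n : ℕ => k (n + 1) :=
    hs.of_nonneg_of_le (fun n => hk0 _) fun n => le_add_of_nonneg_right (hk0 _)
  have hs2 : Summable fun n : ℕ => k (-(n + 1)) :=
    hs.of_nonneg_of_le (fun n => hk0 _) fun n => le_add_of_nonneg_left (hk0 _)
  have hs0 : HasSum (fun n : ℕ => k n) (k 0 + ∑' n : ℕ, k (n + 1)) := by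
    have := (hasSum_nat_add_iff (f := fun n : ℕ => k n) 1).1 (by simpa using hs1.hasSum)
    simpa [add_comm] using this
  have hres := hs0.of_nat_of_neg_add_one hs2.hasSum
  convert hres using 1
  set q : ℂ := Complex.exp (2 * π * Complex.I * x) with hq
  have hqe : q = Complex.exp ((-w : ℝ) + (t : ℝ) * Complex.I) := by
    rw [hq, hxc]
    congr 1
    push_cast
    have : (π : ℂ) ≠ 0 := by exact_mod_cast hpi.ne'
    field_simp
    linear_combination (w : ℂ) * Complex.I_sq
  have hqn : ‖q‖ < 1 := by
    rw [hqe, Complex.norm_exp]; simpa using hw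
  have hgeo : Summable fun n : ℕ => q ^ n := summable_geometric_of_norm_lt_one hqn
  have hre : HasSum (fun n : ℕ => Real.exp (-((n + 1) * w)) * Real.cos ((n + 1) * t))
      (∑' n : ℕ, q ^ (n + 1)).re := by
    have := Complex.hasSum_re ((summable_nat_add_iff 1).2 hgeo).hasSum
    convert this using 2 with n
    rw [hqe, ← Complex.exp_nat_mul, Complex.exp_re]
    simp
  rw [hre.tsum_eq]
  have hcotim := congrArg Complex.im hcot
  have hs12 := hs1.tsum_add hs2
  have e1 : (∑' n : ℕ, (1 / ((x : ℂ) - (n + 1)) + 1 / (x + (n + 1)))).im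
      = -(2 * π * w) * (∑' n : ℕ, k (n + 1) + ∑' n : ℕ, k (-(n + 1))) := by
    rw [← hs12, ← tsum_mul_left]
    exact hsum.tsum_eq.symm
  have e0 := him 0
  simp only [Int.cast_zero, sub_zero] at e0
  rw [e1, hgeo.tsum_eq_zero_add, Complex.sub_im, e0] at hcotim
  simp only [Complex.sub_im, Complex.mul_im, Complex.add_re, Complex.mul_re, Complex.ofReal_re,
    Complex.ofReal_im, Complex.I_re, Complex.I_im, Complex.re_ofNat, Complex.im_ofNat, pow_zero,
    Complex.one_re] at hcotim
  rw [one_div_mul_eq_div, div_eq_iff hw.ne']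
  apply mul_left_cancel₀ hpi.ne'
  linear_combination (-1 / 2) * hcotim

lemma integrableOn_exp_neg_mul_cosh {x : ℝ} (hx : 0 < x) :
    IntegrableOn (fun s => Real.exp (-x * Real.cosh s)) (Set.Ioi 0) := by
  refine (exp_neg_integrableOn_Ioi 0 hx).mono' (by fun_prop) ?_
  refine (ae_restrict_iff' measurableSet_Ioi).2 (Eventually.of_forall fun s hs => ?_)
  rw [Real.norm_of_nonneg (Real.exp_pos _).le]
  gcongr 1
  have h1 : s ≤ Real.cosh s :=
    (Real.self_le_sinh_iff.2 (le_of_lt hs)).trans (Real.sinh_lt_cosh s).le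
  nlinarith

lemma besselK0_nonneg (x : ℝ) : 0 ≤ besselK0 x :=
  integral_nonneg fun _ => (Real.exp_pos _).le

/-- Exponential decay of `K₀`. -/
lemma besselK0_le_exp_mul {δ x : ℝ} (hδ : 0 < δ) (hx : δ ≤ x) :
    besselK0 x ≤ Real.exp (-(x - δ)) * besselK0 δ := by
  unfold besselK0
  rw [← integral_const_mul]
  refine integral_mono (integrableOn_exp_neg_mul_cosh (hδ.trans_le hx))
    ((integrableOn_exp_neg_mul_cosh hδ).const_mul _) fun s => ?_
  change Real.exp (-x * Real.cosh s) ≤ Real.exp (-(x - δ)) * Real.exp (-δ * Real.cosh s)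
  rw [← Real.exp_add]
  gcongr 1
  nlinarith [Real.one_le_cosh s]

lemma summable_besselK0 {r : ℝ} (hr : 0 < r) :
    Summable fun n : ℕ => besselK0 ((n + 1) * r) := by
  have hg : Summable fun n : ℕ => Real.exp (-r) ^ n * besselK0 r :=
    (summable_geometric_of_lt_one (Real.exp_pos _).le (by simpa using hr)).mul_right _
  refine hg.of_nonneg_of_le (fun n => besselK0_nonneg _) fun n => ?_
  have hn : (0 : ℝ) ≤ n := n.cast_nonneg
  refine (besselK0_le_exp_mul hr (by nlinarith)).trans (le_of_eq ?_)
  rw [← Real.exp_nat_mul]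
  congr 2
  ring

lemma image_mul_sinh_Ioi {r : ℝ} (hr : 0 < r) :
    (fun s => r * Real.sinh s) '' Set.Ioi 0 = Set.Ioi 0 := by
  ext x
  simp only [Set.mem_image, Set.mem_Ioi]
  constructor
  · rintro ⟨s, hs, rfl⟩
    have := Real.sinh_pos_iff.2 hs
    positivity
  · intro hx
    refine ⟨Real.arsinh (x / r), Real.arsinh_pos_iff.2 (by positivity), ?_⟩
    rw [Real.sinh_arsinh]
    field_simp

lemma sqrt_sq_add_mul_sinh_sq {r : ℝ} (hr : 0 < r) (s : ℝ) :
    √(r ^ 2 + (r * Real.sinh s) ^ 2) = r * Real.cosh s := by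
  rw [Real.sqrt_eq_iff_mul_self_eq_of_pos (by have := Real.cosh_pos s; positivity)]
  linear_combination (r ^ 2) * Real.cosh_sq s

lemma besselK0_substitution {r : ℝ} (hr : 0 < r) {a : ℝ} (ha : 0 < a) :
    IntegrableOn (fun x => Real.exp (-(a * √(r ^ 2 + x ^ 2))) / √(r ^ 2 + x ^ 2)) (Set.Ioi 0) ∧
    ∫ x in Set.Ioi (0 : ℝ), Real.exp (-(a * √(r ^ 2 + x ^ 2))) / √(r ^ 2 + x ^ 2)
      = besselK0 (a * r) := by
  have hd : ∀ s ∈ Set.Ioi (0 : ℝ), HasDerivWithinAt (fun s => r * Real.sinh s)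
      (r * Real.cosh s) (Set.Ioi 0) s :=
    fun s _ => ((Real.hasDerivAt_sinh s).const_mul r).hasDerivWithinAt
  have hi : Set.InjOn (fun s => r * Real.sinh s) (Set.Ioi 0) := fun s _ s' _ h =>
    Real.sinh_injective (mul_left_cancel₀ hr.ne' h)
  have he (s : ℝ) : |r * Real.cosh s| • (Real.exp (-(a * √(r ^ 2 + (r * Real.sinh s) ^ 2))) /
      √(r ^ 2 + (r * Real.sinh s) ^ 2)) = Real.exp (-(a * r) * Real.cosh s) := by
    have := Real.cosh_pos s
    rw [sqrt_sq_add_mul_sinh_sq hr, abs_of_pos (by positivity), smul_eq_mul]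
    field_simp
  have h1 := integrableOn_image_iff_integrableOn_abs_deriv_smul measurableSet_Ioi hd hi
    (fun x => Real.exp (-(a * √(r ^ 2 + x ^ 2))) / √(r ^ 2 + x ^ 2))
  have h2 := integral_image_eq_integral_abs_deriv_smul measurableSet_Ioi hd hi
    (fun x => Real.exp (-(a * √(r ^ 2 + x ^ 2))) / √(r ^ 2 + x ^ 2))
  simp only [he, image_mul_sinh_Ioi hr] at h1 h2
  exact ⟨h1.2 (integrableOn_exp_neg_mul_cosh (by positivity)), h2⟩

lemma tendsto_arsinh_div_sub_log {r : ℝ} (hr : 0 < r) :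
    Tendsto (fun x => Real.arsinh (x / r) - Real.log x) atTop (𝓝 (Real.log (2 / r))) := by
  have h : Tendsto (fun x : ℝ => Real.log (1 / r + √(x⁻¹ ^ 2 + (1 / r) ^ 2))) atTop
      (𝓝 (Real.log (1 / r + √(0 ^ 2 + (1 / r) ^ 2)))) := by
    refine Tendsto.log ?_ (by positivity)
    exact ((tendsto_inv_atTop_zero.pow 2).add_const _).sqrt.const_add _
  have e : 1 / r + √(0 ^ 2 + (1 / r) ^ 2) = 2 / r := by
    rw [zero_pow two_ne_zero, zero_add, Real.sqrt_sq (by positivity)]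
    ring
  rw [e] at h
  refine h.congr' ?_
  filter_upwards [eventually_gt_atTop 0] with x hx
  rw [Real.arsinh, ← Real.log_div (by positivity) hx.ne']
  congr 1
  have : √(1 + (x / r) ^ 2) = x * √(x⁻¹ ^ 2 + (1 / r) ^ 2) := by
    rw [← Real.sqrt_sq hx.le, ← Real.sqrt_mul (by positivity), Real.sqrt_sq hx.le]
    congr 1
    field_simp
  rw [this]
  field_simp

lemma hasDerivAt_arsinh_div {r : ℝ} (hr : 0 < r) (x : ℝ) :
    HasDerivAt (fun x => Real.arsinh (x / r)) (1 / √(r ^ 2 + x ^ 2)) x := by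
  have h := ((hasDerivAt_id x).div_const r).arsinh
  refine h.congr_deriv ?_
  have : √(r ^ 2 + x ^ 2) = r * √(1 + (x / r) ^ 2) := by
    conv_rhs => rw [← Real.sqrt_sq hr.le, ← Real.sqrt_mul (by positivity), Real.sqrt_sq hr.le]
    congr 1
    field_simp
  rw [this]
  simp [field]

lemma integral_inv_sqrt_sub_inv_sqrt {r R : ℝ} (hr : 0 < r) (hR : r ≤ R) :
    IntegrableOn (fun x => 1 / √(r ^ 2 + x ^ 2) - 1 / √(R ^ 2 + x ^ 2)) (Set.Ioi 0) ∧
    ∫ x in Set.Ioi (0 : ℝ), (1 / √(r ^ 2 + x ^ 2) - 1 / √(R ^ 2 + x ^ 2))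
      = Real.log R - Real.log r := by
  have hR0 := hr.trans_le hR
  have hd : ∀ x ∈ Set.Ici (0 : ℝ), HasDerivAt (fun x => Real.arsinh (x / r) - Real.arsinh (x / R))
      (1 / √(r ^ 2 + x ^ 2) - 1 / √(R ^ 2 + x ^ 2)) x :=
    fun x _ => (hasDerivAt_arsinh_div hr x).sub (hasDerivAt_arsinh_div hR0 x)
  have hp : ∀ x ∈ Set.Ioi (0 : ℝ), 0 ≤ 1 / √(r ^ 2 + x ^ 2) - 1 / √(R ^ 2 + x ^ 2) := by
    intro x _
    rw [sub_nonneg]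
    gcongr
  have hl : Tendsto (fun x => Real.arsinh (x / r) - Real.arsinh (x / R)) atTop
      (𝓝 (Real.log R - Real.log r)) := by
    have := (tendsto_arsinh_div_sub_log hr).sub (tendsto_arsinh_div_sub_log hR0)
    rw [Real.log_div two_ne_zero hr.ne', Real.log_div two_ne_zero hR0.ne'] at this
    convert this using 2 <;> ring
  refine ⟨integrableOn_Ioi_deriv_of_nonneg' hd hp hl, ?_⟩
  rw [integral_Ioi_of_hasDerivAt_of_nonneg' hd hp hl]
  simp

lemma integral_Ioi_inv_sq_add_sq {a : ℝ} (ha : 0 < a) :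
    IntegrableOn (fun x => 1 / (a ^ 2 + x ^ 2)) (Set.Ioi 0) ∧
    ∫ x in Set.Ioi (0 : ℝ), 1 / (a ^ 2 + x ^ 2) = π / 2 * (1 / a) := by
  have hd : ∀ x ∈ Set.Ici (0 : ℝ), HasDerivAt (fun x => 1 / a * Real.arctan (x / a))
      (1 / (a ^ 2 + x ^ 2)) x := by
    intro x _
    refine ((((hasDerivAt_id x).div_const a).arctan).const_mul (1 / a)).congr_deriv ?_
    simp [field]
  have hp : ∀ x ∈ Set.Ioi (0 : ℝ), 0 ≤ 1 / (a ^ 2 + x ^ 2) := fun x _ => by positivity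
  have hl : Tendsto (fun x => 1 / a * Real.arctan (x / a)) atTop (𝓝 (1 / a * (π / 2))) :=
    ((tendsto_nhds_of_tendsto_nhdsWithin tendsto_arctan_atTop).comp
      (tendsto_id.atTop_div_const ha)).const_mul _
  refine ⟨integrableOn_Ioi_deriv_of_nonneg' hd hp hl, ?_⟩
  rw [integral_Ioi_of_hasDerivAt_of_nonneg' hd hp hl]
  simp [mul_comm]

lemma abs_mul_cos_le {a : ℝ} (ha : 0 ≤ a) (s : ℝ) : |a * Real.cos s| ≤ a := by
  rw [abs_mul, abs_of_nonneg ha]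
  exact mul_le_of_le_one_right ha (Real.abs_cos_le_one s)

lemma summable_besselK0_mul_cos {r : ℝ} (hr : 0 < r) (t : ℝ) :
    Summable fun n : ℕ => besselK0 ((n + 1) * r) * Real.cos ((n + 1) * t) :=
  (summable_besselK0 hr).of_norm_bounded fun _ => abs_mul_cos_le (besselK0_nonneg _) _

lemma summable_exp_mul_cos {w : ℝ} (hw : 0 < w) (t : ℝ) :
    Summable fun n : ℕ => Real.exp (-((n + 1) * w)) * Real.cos ((n + 1) * t) := by
  have hg : Summable fun n : ℕ => Real.exp (-w) ^ (n + 1) :=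
    (summable_nat_add_iff 1).2
      (summable_geometric_of_lt_one (Real.exp_pos _).le (by simpa using hw))
  refine hg.of_norm_bounded fun n => ?_
  rw [← Real.exp_nat_mul, show ((n + 1 : ℕ) : ℝ) * -w = -((n + 1) * w) by push_cast; ring]
  exact abs_mul_cos_le (Real.exp_pos _).le _

/-- Poisson summation for the difference of two Coulomb potentials at distances `r ≤ R` from the
axis. -/
lemma tsum_inv_sqrt_sub_inv_sqrt {r R : ℝ} (hr : 0 < r) (hR : r ≤ R) (t : ℝ)
    (hs : Summable fun m : ℤ =>
      1 / √(r ^ 2 + (t - 2 * m * π) ^ 2) - 1 / √(R ^ 2 + (t - 2 * m * π) ^ 2)) :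
    π * ∑' m : ℤ, (1 / √(r ^ 2 + (t - 2 * m * π) ^ 2) - 1 / √(R ^ 2 + (t - 2 * m * π) ^ 2)) =
      Real.log R - Real.log r
        + 2 * (∑' n : ℕ, besselK0 ((n + 1) * r) * Real.cos ((n + 1) * t)
          - ∑' n : ℕ, besselK0 ((n + 1) * R) * Real.cos ((n + 1) * t)) := by
  have hR0 := hr.trans_le hR
  have hw {ρ : ℝ} (hρ : 0 < ρ) (x : ℝ) : 0 < √(ρ ^ 2 + x ^ 2) := by positivity
  have ha {ρ : ℝ} (hρ : 0 < ρ) (s : ℝ) := integral_Ioi_inv_sq_add_sq (hw hρ s)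
  have hsq {ρ : ℝ} (x : ℝ) : √(ρ ^ 2 + x ^ 2) ^ 2 = ρ ^ 2 + x ^ 2 := Real.sq_sqrt (by positivity)
  simp only [hsq] at ha
  -- integrate the partial fraction expansions in the auxiliary variable
  set F : ℤ → ℝ → ℝ := fun m x => 1 / (r ^ 2 + (t - 2 * m * π) ^ 2 + x ^ 2)
    - 1 / (R ^ 2 + (t - 2 * m * π) ^ 2 + x ^ 2) with hF
  have hFint (m : ℤ) : IntegrableOn (F m) (Set.Ioi 0) := (ha hr _).1.sub (ha hR0 _).1
  have hFval (m : ℤ) : ∫ x in Set.Ioi (0 : ℝ), F m x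
      = π / 2 * (1 / √(r ^ 2 + (t - 2 * m * π) ^ 2) - 1 / √(R ^ 2 + (t - 2 * m * π) ^ 2)) := by
    rw [integral_sub (ha hr _).1 (ha hR0 _).1, (ha hr _).2, (ha hR0 _).2]
    ring
  have hFnn (m : ℤ) (x : ℝ) : 0 ≤ F m x := by
    rw [hF, sub_nonneg]
    gcongr
  have hFsum := hasSum_integral_of_summable_integral_norm (μ := volume.restrict (Set.Ioi 0)) hFint
    (by simpa only [Real.norm_of_nonneg (hFnn _ _), hFval] using hs.mul_left (π / 2))
  simp only [hFval] at hFsum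
  have hker {ρ : ℝ} (hρ : 0 < ρ) (x : ℝ) := hasSum_inv_sq_add_sq (hw hρ x) t
  simp only [hsq] at hker
  -- the exponential side, indexed by the frequency
  set D : ℕ → ℝ → ℝ := fun n x => if n = 0 then
      1 / 2 * (1 / √(r ^ 2 + x ^ 2) - 1 / √(R ^ 2 + x ^ 2)) else
      (Real.exp (-(n * √(r ^ 2 + x ^ 2))) / √(r ^ 2 + x ^ 2)
        - Real.exp (-(n * √(R ^ 2 + x ^ 2))) / √(R ^ 2 + x ^ 2)) * Real.cos (n * t) with hD
  have hK {ρ : ℝ} (hρ : 0 < ρ) (n : ℕ) :=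
    besselK0_substitution hρ (a := (n + 1 : ℕ)) (by positivity)
  have hlog := integral_inv_sqrt_sub_inv_sqrt hr hR
  have hDint (n : ℕ) : IntegrableOn (D n) (Set.Ioi 0) := by
    rcases n with _ | n
    · exact hlog.1.const_mul _
    · have := ((hK hr n).1.sub (hK hR0 n).1).mul_const (Real.cos ((n + 1 : ℕ) * t))
      simp only [hD, if_neg n.succ_ne_zero]
      exact this
  have hDval0 : ∫ x in Set.Ioi (0 : ℝ), D 0 x = 1 / 2 * (Real.log R - Real.log r) := by
    rw [← hlog.2, ← integral_const_mul]
    rfl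
  have hDval (n : ℕ) : ∫ x in Set.Ioi (0 : ℝ), D (n + 1) x
      = besselK0 ((n + 1) * r) * Real.cos ((n + 1) * t)
        - besselK0 ((n + 1) * R) * Real.cos ((n + 1) * t) := by
    simp only [hD, if_neg n.succ_ne_zero]
    rw [integral_mul_const, integral_sub (hK hr n).1 (hK hR0 n).1, (hK hr n).2, (hK hR0 n).2]
    push_cast
    ring
  have hDsum := hasSum_integral_of_summable_integral_norm (μ := volume.restrict (Set.Ioi 0)) hDint
    (by
      refine (summable_nat_add_iff 1).1 ?_
      refine ((summable_besselK0 hr).add (summable_besselK0 hR0)).of_nonneg_of_le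
        (fun n => integral_nonneg fun _ => norm_nonneg _) fun n => ?_
      have := ((hK hr n).1.add (hK hR0 n).1)
      refine (integral_mono (hDint (n + 1)).norm this fun x => ?_).trans (le_of_eq ?_)
      · simp only [hD, if_neg n.succ_ne_zero, Pi.add_apply, norm_mul]
        refine (mul_le_of_le_one_right (norm_nonneg _) (Real.abs_cos_le_one _)).trans ?_
        refine (norm_sub_le _ _).trans (le_of_eq ?_)
        rw [Real.norm_of_nonneg (by positivity), Real.norm_of_nonneg (by positivity)]
      · rw [integral_add' (hK hr n).1 (hK hR0 n).1, (hK hr n).2, (hK hR0 n).2]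
        push_cast
        rfl)
  have hpt (x : ℝ) : ∑' m : ℤ, F m x = ∑' n : ℕ, D n x := by
    have h1 := (hker hr x).sub (hker hR0 x)
    have hFx (m : ℤ) : F m x = 1 / (r ^ 2 + x ^ 2 + (t - 2 * m * π) ^ 2)
        - 1 / (R ^ 2 + x ^ 2 + (t - 2 * m * π) ^ 2) := by
      simp only [hF, add_right_comm]
    have e (ρ : ℝ) (hρ : 0 < ρ) := (summable_exp_mul_cos (hw hρ x) t).hasSum.mul_left
      (1 / √(ρ ^ 2 + x ^ 2))
    have h2 := (hasSum_nat_add_iff (f := fun n => D n x) 1).1 (by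
      convert (e r hr).sub (e R hR0) using 2 with n
      simp only [hD, if_neg n.succ_ne_zero]
      push_cast
      ring)
    simp only [hFx]
    rw [h1.tsum_eq, h2.tsum_eq]
    simp [hD]
    ring
  simp only [hpt] at hFsum
  have hfin := hFsum.tsum_eq.trans hDsum.tsum_eq.symm
  rw [hDsum.summable.tsum_eq_zero_add, hDval0, tsum_mul_left] at hfin
  simp only [hDval] at hfin
  rw [(summable_besselK0_mul_cos hr t).tsum_sub (summable_besselK0_mul_cos hR0 t)] at hfin
  linear_combination 2 * hfin

/-- The mean of `s ↦ 1 / √(R² + s²)` over the interval of length `2π` centred at `τ`. -/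
def cellMean (R τ : ℝ) : ℝ :=
  1 / (2 * π) * (Real.arsinh ((τ + π) / R) - Real.arsinh ((τ - π) / R))

lemma exists_cellMean_eq {R : ℝ} (hR : 0 < R) (τ : ℝ) :
    ∃ ξ, |ξ - τ| ≤ π ∧ cellMean R τ = 1 / √(R ^ 2 + ξ ^ 2) := by
  have hpi := Real.pi_pos
  obtain ⟨ξ, hξ, h⟩ := exists_hasDerivAt_eq_slope (fun x => Real.arsinh (x / R))
    (fun x => 1 / √(R ^ 2 + x ^ 2)) (show τ - π < τ + π by linarith)
    (fun x _ => (hasDerivAt_arsinh_div hR x).continuousAt.continuousWithinAt)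
    fun x _ => hasDerivAt_arsinh_div hR x
  refine ⟨ξ, abs_le.2 ⟨by linarith [hξ.1], by linarith [hξ.2]⟩, ?_⟩
  rw [h, cellMean]
  ring

lemma abs_sqrt_sub_sqrt_le {R : ℝ} (hR : 0 < R) (x y : ℝ) :
    |√(R ^ 2 + x ^ 2) - √(R ^ 2 + y ^ 2)| ≤ |x - y| := by
  have hx : |x| ≤ √(R ^ 2 + x ^ 2) := Real.abs_le_sqrt (by nlinarith)
  have hy : |y| ≤ √(R ^ 2 + y ^ 2) := Real.abs_le_sqrt (by nlinarith)
  have hx0 : 0 < √(R ^ 2 + x ^ 2) := by positivity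
  have hy0 : 0 < √(R ^ 2 + y ^ 2) := by positivity
  have hs : (√(R ^ 2 + x ^ 2) - √(R ^ 2 + y ^ 2)) * (√(R ^ 2 + x ^ 2) + √(R ^ 2 + y ^ 2))
      = (x - y) * (x + y) := by
    have h1 := Real.sq_sqrt (show 0 ≤ R ^ 2 + x ^ 2 by positivity)
    have h2 := Real.sq_sqrt (show 0 ≤ R ^ 2 + y ^ 2 by positivity)
    linear_combination h1 - h2
  have ha := congrArg abs hs
  rw [abs_mul, abs_mul, abs_of_pos (add_pos hx0 hy0)] at ha
  have hadd : |x + y| ≤ √(R ^ 2 + x ^ 2) + √(R ^ 2 + y ^ 2) :=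
    (abs_add_le x y).trans (add_le_add hx hy)
  refine le_of_mul_le_mul_right ?_ (add_pos hx0 hy0)
  rw [ha]
  gcongr

lemma abs_inv_sqrt_sub_cellMean_le {R a τ : ℝ} (hR : 0 < R) (ha : 0 < a)
    (h : ∀ ξ, |ξ - τ| ≤ π → a ≤ √(R ^ 2 + ξ ^ 2)) :
    |1 / √(R ^ 2 + τ ^ 2) - cellMean R τ| ≤ π / a ^ 2 := by
  obtain ⟨ξ, hξ, he⟩ := exists_cellMean_eq hR τ
  have h1 := h τ (by simp [Real.pi_pos.le])
  have h2 := h ξ hξ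
  have h1' := ha.trans_le h1
  have h2' := ha.trans_le h2
  rw [he, div_sub_div _ _ h1'.ne' h2'.ne', one_mul, mul_one, abs_div, abs_of_pos (mul_pos h1' h2'),
    sq a]
  have := (abs_sqrt_sub_sqrt_le hR ξ τ).trans hξ
  gcongr

lemma one_add_abs_le_sqrt {R t ξ : ℝ} {m : ℤ} (hR : |t| + 2 * π ≤ R)
    (hξ : |ξ - (t - 2 * m * π)| ≤ π) : 1 + |(m : ℝ)| ≤ √(R ^ 2 + ξ ^ 2) := by
  have hpi := Real.pi_gt_three
  have hR0 : 0 < R := by linarith [abs_nonneg t]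
  have hm : 2 * π * |(m : ℝ)| ≤ |ξ| + |t| + π := by
    have e : 2 * π * |(m : ℝ)| = |2 * m * π| := by
      rw [abs_mul, abs_mul, abs_of_pos Real.pi_pos, abs_two]
      ring
    rw [e, show (2 * m * π : ℝ) = (ξ - (t - 2 * m * π)) - ξ + t by ring]
    refine (abs_add_le _ _).trans ?_
    have := abs_sub (ξ - (t - 2 * m * π)) ξ
    linarith
  apply Real.le_sqrt_of_sq_le
  have h0 := abs_nonneg ξ
  have h1 : 2 * (1 + |(m : ℝ)|) ≤ |ξ| + R := by nlinarith [abs_nonneg (m : ℝ)]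
  rw [← sq_abs ξ]
  nlinarith [sq_nonneg (|ξ| - R), abs_nonneg (m : ℝ)]

lemma summable_pi_div_one_add_abs_sq : Summable fun m : ℤ => π / (1 + |(m : ℝ)|) ^ 2 := by
  have h : Summable fun n : ℕ => π / (1 + (n : ℝ)) ^ 2 := by
    have := ((summable_nat_add_iff 1).2 (Real.summable_one_div_nat_pow.2 one_lt_two)).mul_left π
    refine this.congr fun n => ?_
    push_cast
    rw [mul_one_div, add_comm]
  refine Summable.of_nat_of_neg ?_ ?_ <;> simpa using h

lemma summable_inv_sqrt_sub_cellMean {R t : ℝ} (hR : |t| + 2 * π ≤ R) :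
    Summable fun m : ℤ =>
      1 / √(R ^ 2 + (t - 2 * m * π) ^ 2) - cellMean R (t - 2 * m * π) := by
  have hR0 : 0 < R := by linarith [abs_nonneg t, Real.pi_pos]
  exact summable_pi_div_one_add_abs_sq.of_norm_bounded fun m =>
    abs_inv_sqrt_sub_cellMean_le hR0 (by positivity) fun ξ hξ => one_add_abs_le_sqrt hR hξ

lemma tendsto_tsum_inv_sqrt_sub_cellMean (t : ℝ) :
    Tendsto (fun R : ℝ => ∑' m : ℤ,
      (1 / √(R ^ 2 + (t - 2 * m * π) ^ 2) - cellMean R (t - 2 * m * π))) atTop (𝓝 0) := by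
  have hz : ∑' _ : ℤ, (0 : ℝ) = 0 := tsum_zero
  refine hz ▸ tendsto_tsum_of_dominated_convergence summable_pi_div_one_add_abs_sq (fun m => ?_) ?_
  · refine squeeze_zero_norm' (a := fun R : ℝ => π / R ^ 2) ?_
      ((tendsto_pow_atTop two_ne_zero).const_div_atTop π)
    filter_upwards [eventually_gt_atTop 0] with R hR
    refine abs_inv_sqrt_sub_cellMean_le hR hR fun ξ _ => ?_
    exact Real.le_sqrt_of_sq_le (by nlinarith)
  · filter_upwards [eventually_ge_atTop (|t| + 2 * π)] with R hR m
    have hR0 : 0 < R := by linarith [abs_nonneg t, Real.pi_pos]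
    exact abs_inv_sqrt_sub_cellMean_le hR0 (by positivity) fun ξ hξ => one_add_abs_le_sqrt hR hξ

lemma sum_range_cellMean_sub_aCoeff (R t : ℝ) (N : ℕ) :
    ∑ n ∈ Finset.range (N + 1), ((cellMean R (t - 2 * (n : ℤ) * π) - aCoeff n)
        + (cellMean R (t - 2 * (-(n : ℤ) : ℤ) * π) - aCoeff (-n)))
      = cellMean R t - aCoeff 0 + (1 / (2 * π) * (Real.arsinh ((2 * N * π + (π + t)) / R)
        + Real.arsinh ((2 * N * π + (π - t)) / R)) - (harmonic N : ℝ) / π - aCoeff 0) := by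
  have hpi := Real.pi_pos
  induction N with
  | zero =>
    simp only [cellMean, zero_add, Finset.sum_range_one, Nat.cast_zero, Int.cast_zero, mul_zero,
      zero_mul, sub_zero, neg_zero, harmonic_zero, Rat.cast_zero, zero_div]
    rw [show (t - π) / R = -((π - t) / R) by ring, Real.arsinh_neg, add_comm t π]
    ring
  | succ N ih =>
    have ha : aCoeff ((N + 1 : ℕ) : ℤ) = 1 / (2 * (N + 1) * π) := by
      rw [aCoeff, if_neg (by positivity)]
      simp only [Int.cast_natCast, Nat.abs_cast]
      push_cast
      rfl
    have ha' : aCoeff (-((N + 1 : ℕ) : ℤ)) = 1 / (2 * (N + 1) * π) := by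
      rw [aCoeff, if_neg (by omega), Int.cast_neg, abs_neg]
      simp only [Int.cast_natCast, Nat.abs_cast]
      push_cast
      rfl
    rw [Finset.sum_range_succ, ih, ha, ha', harmonic_succ, cellMean, cellMean, cellMean]
    push_cast
    rw [show (t - 2 * ((N : ℝ) + 1) * π + π) / R = -((2 * N * π + (π - t)) / R) by ring,
      show (t - 2 * ((N : ℝ) + 1) * π - π) / R = -((2 * (N + 1) * π + (π - t)) / R) by ring,
      show (t - 2 * -((N : ℝ) + 1) * π + π) / R = ((2 * (N + 1) * π + (π + t)) / R) by ring,
      show (t - 2 * -((N : ℝ) + 1) * π - π) / R = ((2 * N * π + (π + t)) / R) by ring,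
      Real.arsinh_neg, Real.arsinh_neg]
    field_simp
    ring

lemma tendsto_arsinh_sub_log_nat {R : ℝ} (hR : 0 < R) (c : ℝ) :
    Tendsto (fun N : ℕ => Real.arsinh ((2 * N * π + c) / R) - Real.log N) atTop
      (𝓝 (Real.log (4 * π) - Real.log R)) := by
  have hpi := Real.pi_pos
  have hlin : Tendsto (fun N : ℕ => 2 * (N : ℝ) * π + c) atTop atTop := by
    refine tendsto_atTop_add_const_right _ _ ?_
    exact (tendsto_natCast_atTop_atTop.const_mul_atTop two_pos).atTop_mul_const hpi
  have h1 := (tendsto_arsinh_div_sub_log hR).comp hlin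
  have h2 : Tendsto (fun N : ℕ => Real.log (2 * π + c / N)) atTop (𝓝 (Real.log (2 * π + 0))) :=
    ((tendsto_const_div_atTop_nhds_zero_nat c).const_add _).log (by positivity)
  have h3 := h1.add h2
  rw [add_zero, Real.log_div two_ne_zero hR.ne', Real.log_mul two_ne_zero hpi.ne'] at h3
  rw [show (4 : ℝ) * π = 2 * (2 * π) by ring, Real.log_mul two_ne_zero (by positivity),
    Real.log_mul two_ne_zero hpi.ne']
  convert h3.congr' ?_ using 2
  · ring
  filter_upwards [eventually_gt_atTop 0, hlin.eventually_gt_atTop 0] with N hN hN'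
  have hN0 : (0 : ℝ) < N := by exact_mod_cast hN
  rw [Function.comp, show 2 * π + c / N = (2 * N * π + c) / N by field_simp,
    Real.log_div hN'.ne' hN0.ne']
  ring

lemma tsum_inv_sqrt_sub_cellMean_eq {R t S : ℝ} (hR : |t| + 2 * π ≤ R)
    (hS : HasSum (fun m : ℤ => 1 / √(R ^ 2 + (t - 2 * m * π) ^ 2) - aCoeff m) S) :
    π * ∑' m : ℤ, (1 / √(R ^ 2 + (t - 2 * m * π) ^ 2) - cellMean R (t - 2 * m * π))
      = π * S + Real.log R := by
  have hpi := Real.pi_pos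
  have hR0 : 0 < R := by linarith [abs_nonneg t]
  have h := hS.sub (summable_inv_sqrt_sub_cellMean hR).hasSum
  simp only [sub_sub_sub_cancel_left] at h
  have h' := h.nat_add_neg.tendsto_sum_nat.comp (tendsto_add_atTop_nat 1)
  simp only [Function.comp_def, sum_range_cellMean_sub_aCoeff] at h'
  have hlim := ((((tendsto_arsinh_sub_log_nat hR0 (π + t)).add
    (tendsto_arsinh_sub_log_nat hR0 (π - t))).const_mul (1 / (2 * π))).sub
    (Real.tendsto_harmonic_sub_log.div_const π)).sub_const (aCoeff 0)
  have hlim' := hlim.const_add (cellMean R t - aCoeff 0)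
  have := tendsto_nhds_unique h' (hlim'.congr fun N => ?_)
  · simp only [aCoeff, if_true, Int.cast_zero, mul_zero, zero_mul, sub_zero] at this
    generalize ∑' m : ℤ, (1 / √(R ^ 2 + (t - 2 * m * π) ^ 2) - cellMean R (t - 2 * m * π)) = T
      at this ⊢
    field_simp at this
    linarith
  · ring

theorem tendsto_tsum_besselK0_mul_cos (t : ℝ) :
    Tendsto (fun R : ℝ => ∑' n : ℕ, besselK0 ((n + 1) * R) * cos ((n + 1) * t)) atTop (𝓝 0) := by
  have hbound : Summable fun n : ℕ => besselK0 1 * exp (-(n : ℝ)) := by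
    refine Summable.mul_left _ ?_
    simpa using Real.summable_exp_nat_mul_of_ge (c := -1) (by norm_num) (f := fun n => (n : ℝ))
      (fun n => le_rfl)
  have hterm : ∀ (n : ℕ) (R : ℝ), 1 ≤ R →
      besselK0 ((n + 1) * R) ≤ exp (-(R - 1)) * (besselK0 1 * exp (-(n : ℝ))) := by
    intro n R hR
    have hn : (0 : ℝ) ≤ n := n.cast_nonneg
    have h := besselK0_le_exp_mul (δ := 1) (x := (n + 1) * R) one_pos (by nlinarith)
    refine h.trans ?_
    rw [mul_comm (besselK0 1), ← mul_assoc, ← exp_add]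
    refine mul_le_mul_of_nonneg_right (exp_le_exp.2 (by nlinarith)) (besselK0_nonneg 1)
  have h0 : Tendsto (fun R : ℝ => exp (-(R - 1))) atTop (𝓝 0) :=
    tendsto_exp_neg_atTop_nhds_zero.comp (tendsto_atTop_add_const_right _ (-1) tendsto_id)
  have h1 : Tendsto (fun R : ℝ => exp (-(R - 1)) * ∑' n : ℕ, besselK0 1 * exp (-(n : ℝ)))
      atTop (𝓝 0) := by simpa using h0.mul_const (∑' n : ℕ, besselK0 1 * exp (-(n : ℝ)))
  refine squeeze_zero_norm' ?_ h1
  filter_upwards [eventually_ge_atTop 1] with R hR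
  rw [← tsum_mul_left]
  refine tsum_of_norm_bounded (hbound.mul_left _).hasSum fun n => ?_
  rw [norm_mul, Real.norm_of_nonneg (besselK0_nonneg _)]
  exact (mul_le_of_le_one_right (besselK0_nonneg _) (abs_cos_le_one _)).trans (hterm n R hR)

theorem radius_singPt (k : ℤ) : radius (singPt k) = 0 := by
  simp [radius, singPt]

theorem hasSum_of_hasSum_gTerm {G : E3 → ℝ}
    (hG : ∀ x : E3, (∀ k : ℤ, x ≠ singPt k) → HasSum (fun m : ℤ => gTerm m x) (G x))
    {x : E3} (hx : radius x ≠ 0) :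
    HasSum (fun m : ℤ => 1 / √(radius x ^ 2 + (x 2 - 2 * m * π) ^ 2) - aCoeff m) (-2 * G x) := by
  have h := (hG x fun k hk => hx (hk ▸ radius_singPt k)).mul_left (-2)
  have e : (fun m : ℤ => 1 / √(radius x ^ 2 + (x 2 - 2 * m * π) ^ 2) - aCoeff m) =
      fun m : ℤ => -2 * gTerm m x := by
    funext m
    rw [gTerm, radius, sq_sqrt (by positivity)]
    ring
  rwa [e]

theorem two_mul_tsum_besselK0_mul_cos {G : E3 → ℝ}
    (hG : ∀ x : E3, (∀ k : ℤ, x ≠ singPt k) → HasSum (fun m : ℤ => gTerm m x) (G x))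
    {x : E3} (hx : radius x ≠ 0) :
    2 * ∑' n : ℕ, besselK0 ((n + 1) * radius x) * cos ((n + 1) * x 2)
      = log (radius x) - 2 * π * G x := by
  have hr : 0 < radius x := lt_of_le_of_ne (sqrt_nonneg _) hx.symm
  set r := radius x with hrdef
  set t := x 2 with ht
  have hSr := hasSum_of_hasSum_gTerm hG hx
  have key : ∀ R, max r (|t| + 2 * π) ≤ R →
      2 * π * G x - log r + 2 * ∑' n : ℕ, besselK0 ((n + 1) * r) * cos ((n + 1) * t)
        = 2 * (∑' n : ℕ, besselK0 ((n + 1) * R) * cos ((n + 1) * t)) -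
          π * ∑' m : ℤ, (1 / √(R ^ 2 + (t - 2 * m * π) ^ 2) - cellMean R (t - 2 * m * π)) := by
    intro R hR
    have hrR : r ≤ R := (le_max_left _ _).trans hR
    have hR0 : 0 < R := hr.trans_le hrR
    have hrad : radius (!₂[R, 0, t] : E3) = R := by
      simp [radius, sqrt_sq hR0.le]
    have hSR := hasSum_of_hasSum_gTerm hG (x := !₂[R, 0, t]) (by rw [hrad]; exact hR0.ne')
    rw [hrad] at hSR
    have hSR' : HasSum (fun m : ℤ => 1 / √(R ^ 2 + (t - 2 * m * π) ^ 2) - aCoeff m)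
      (-2 * G !₂[R, 0, t]) := by simpa using hSR
    have hd := hSr.sub hSR'
    have hd' : HasSum (fun m : ℤ => 1 / √(r ^ 2 + (t - 2 * m * π) ^ 2) -
        1 / √(R ^ 2 + (t - 2 * m * π) ^ 2)) (-2 * G x - -2 * G !₂[R, 0, t]) := by
      simpa only [sub_sub_sub_cancel_right] using hd
    have h1 := tsum_inv_sqrt_sub_inv_sqrt hr hrR t hd'.summable
    rw [hd'.tsum_eq] at h1
    have h2 := tsum_inv_sqrt_sub_cellMean_eq ((le_max_right _ _).trans hR) hSR'
    rw [h2]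
    linarith
  have hlim : Tendsto (fun R : ℝ =>
      2 * (∑' n : ℕ, besselK0 ((n + 1) * R) * cos ((n + 1) * t)) -
        π * ∑' m : ℤ, (1 / √(R ^ 2 + (t - 2 * m * π) ^ 2) - cellMean R (t - 2 * m * π)))
      atTop (𝓝 0) := by
    simpa using ((tendsto_tsum_besselK0_mul_cos t).const_mul 2).sub
      ((tendsto_tsum_inv_sqrt_sub_cellMean t).const_mul π)
  have hconst := tendsto_const_nhds (x := 2 * π * G x - log r +
    2 * ∑' n : ℕ, besselK0 ((n + 1) * r) * cos ((n + 1) * t)) (f := atTop (α := ℝ))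
  have h := tendsto_nhds_unique (hconst.congr' ?_) hlim
  · linarith
  · filter_upwards [eventually_ge_atTop (max r (|t| + 2 * π))] with R hR using key R hR

theorem hasSum_int_ne_zero_iff {α : Type*} [AddCommMonoid α] [TopologicalSpace α]
    {f : ℤ → α} (hf : f 0 = 0) {a : α} :
    HasSum (fun m : {m : ℤ // m ≠ 0} => f m) a ↔ HasSum f a := by
  refine hasSum_subtype_iff_of_support_subset (s := {m : ℤ | m ≠ 0}) fun m hm h0 => hm ?_
  rw [h0, hf]

theorem hasSum_besselK0_mul_cexp {r : ℝ} (hr : 0 < r) (t : ℝ) :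
    HasSum (fun m : {m : ℤ // m ≠ 0} =>
        ((besselK0 (|((m : ℤ) : ℝ)| * r) : ℝ) : ℂ) * Complex.exp (Complex.I * ((m : ℤ) : ℂ) * (t : ℂ)))
      ((2 * ∑' n : ℕ, besselK0 ((n + 1) * r) * cos ((n + 1) * t) : ℝ) : ℂ) := by
  set f : ℤ → ℂ := fun m => ((besselK0 (|(m : ℝ)| * r) : ℝ) : ℂ) *
    Complex.exp (Complex.I * (m : ℂ) * (t : ℂ)) with hf
  have hnorm : ∀ m : ℤ, ‖f m‖ = besselK0 (|(m : ℝ)| * r) := by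
    intro m
    have : Complex.I * (m : ℂ) * (t : ℂ) = ((m * t : ℝ) : ℂ) * Complex.I := by push_cast; ring
    rw [hf]
    simp only
    rw [norm_mul, this, Complex.norm_exp_ofReal_mul_I, mul_one, Complex.norm_real,
      Real.norm_of_nonneg (besselK0_nonneg _)]
  have hp : Summable fun n : ℕ => f ((n : ℤ) + 1) := by
    refine Summable.of_norm ((summable_besselK0 hr).congr fun n => ?_)
    rw [hnorm]
    push_cast
    rw [abs_of_nonneg (by positivity)]
  have hn : Summable fun n : ℕ => f (-((n : ℤ) + 1)) := by
    refine Summable.of_norm ((summable_besselK0 hr).congr fun n => ?_)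
    rw [hnorm]
    push_cast
    rw [abs_neg, abs_of_nonneg (by positivity)]
  set g : ℤ → ℂ := fun m => if m = 0 then 0 else f m with hg
  have hgf : (fun m : {m : ℤ // m ≠ 0} => f m) = fun m : {m : ℤ // m ≠ 0} => g m := by
    ext m
    simp [hg, m.2]
  have hgp : (fun n : ℕ => g ((n : ℤ) + 1)) = fun n : ℕ => f ((n : ℤ) + 1) := by
    ext n
    simp only [hg]
    rw [if_neg (by omega)]
  have hgn : (fun n : ℕ => g (-((n : ℤ) + 1))) = fun n : ℕ => f (-((n : ℤ) + 1)) := by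
    ext n
    simp only [hg]
    rw [if_neg (by omega)]
  have hpair : ∀ n : ℕ, f ((n : ℤ) + 1) + f (-((n : ℤ) + 1)) =
      ((2 * (besselK0 ((n + 1) * r) * cos ((n + 1) * t)) : ℝ) : ℂ) := by
    intro n
    simp only [hf]
    push_cast
    rw [abs_neg, abs_of_nonneg (by positivity : (0 : ℝ) ≤ n + 1), Complex.cos]
    have e1 : Complex.I * ((n : ℂ) + 1) * t = (n + 1) * t * Complex.I := by ring
    have e2 : Complex.I * (-((n : ℂ) + 1)) * t = -((n + 1) * t) * Complex.I := by ring
    rw [e1, e2]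
    ring
  change HasSum (fun m : {m : ℤ // m ≠ 0} => f m) _
  rw [hgf, hasSum_int_ne_zero_iff (by simp [hg])]
  have hgp' : HasSum (fun n : ℕ => g n) (∑' n : ℕ, f ((n : ℤ) + 1)) := by
    rw [← hasSum_nat_add_iff' 1]
    simpa [hg, hgp] using (hgp ▸ hp.hasSum : HasSum (fun n : ℕ => g ((n : ℤ) + 1)) _)
  have h := hgp'.of_nat_of_neg_add_one (hgn ▸ hn.hasSum)
  convert h using 1
  rw [← hp.tsum_add hn, ← tsum_mul_left, Complex.ofReal_tsum]
  exact tsum_congr fun n => (hpair n).symm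

/-- The modified Bessel function `K₀` on the right half plane. -/
def complexBesselK0 (w : ℂ) : ℂ :=
  ∫ s in Set.Ioi (0 : ℝ), Complex.exp (-w * (Real.cosh s : ℂ))

theorem norm_cexp_neg_mul_cosh (w : ℂ) (s : ℝ) :
    ‖Complex.exp (-w * (Real.cosh s : ℂ))‖ = exp (-w.re * Real.cosh s) := by
  rw [Complex.norm_exp, Complex.re_mul_ofReal, Complex.neg_re]

theorem norm_complexBesselK0_le (w : ℂ) : ‖complexBesselK0 w‖ ≤ besselK0 w.re := by
  refine (norm_integral_le_integral_norm _).trans_eq ?_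
  simp only [norm_cexp_neg_mul_cosh, besselK0]

theorem complexBesselK0_ofReal (x : ℝ) : complexBesselK0 x = besselK0 x := by
  rw [complexBesselK0, besselK0, ← integral_complex_ofReal]
  push_cast
  rfl

theorem differentiableOn_complexBesselK0 :
    DifferentiableOn ℂ complexBesselK0 {w | 0 < w.re} := by
  intro w hw
  have hw : 0 < w.re := hw
  obtain ⟨δ, hδ, hδw⟩ : ∃ δ > 0, 2 * δ < w.re := ⟨w.re / 3, by positivity, by linarith⟩
  have hs : {w : ℂ | 2 * δ < w.re} ∈ 𝓝 w :=
    (isOpen_lt continuous_const Complex.continuous_re).mem_nhds hδw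
  have hwi : Integrable (fun s : ℝ => Complex.exp (-w * (Real.cosh s : ℂ)))
      (volume.restrict (Set.Ioi 0)) := by
    refine (integrable_norm_iff ?_).1 ?_
    · exact Continuous.aestronglyMeasurable (by fun_prop)
    · simp only [norm_cexp_neg_mul_cosh]
      exact integrableOn_exp_neg_mul_cosh hw
  have h := hasDerivAt_integral_of_dominated_loc_of_deriv_le (𝕜 := ℂ)
    (μ := volume.restrict (Set.Ioi (0 : ℝ)))
    (F := fun w s => Complex.exp (-w * (Real.cosh s : ℂ)))
    (F' := fun w s => Complex.exp (-w * (Real.cosh s : ℂ)) * (-1 * (Real.cosh s : ℂ)))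
    (bound := fun s => δ⁻¹ * exp (-δ * Real.cosh s)) hs
    (Eventually.of_forall fun v => Continuous.aestronglyMeasurable (by fun_prop)) hwi
    (Continuous.aestronglyMeasurable (by fun_prop))
    (Eventually.of_forall fun s v hv => ?_)
    ((integrableOn_exp_neg_mul_cosh hδ).const_mul _)
    (Eventually.of_forall fun s v hv =>
      (((hasDerivAt_id v).neg).mul_const _).cexp)
  · exact h.2.differentiableAt.differentiableWithinAt
  · have hv : 2 * δ < v.re := hv
    have hc := Real.cosh_pos s
    rw [norm_mul, norm_cexp_neg_mul_cosh, neg_one_mul, norm_neg, Complex.norm_real,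
      Real.norm_of_nonneg hc.le]
    have h1 : δ * Real.cosh s ≤ exp (δ * Real.cosh s) := by
      linarith [add_one_le_exp (δ * Real.cosh s)]
    have h2 : exp (-v.re * Real.cosh s) ≤ exp (-δ * Real.cosh s) * exp (-(δ * Real.cosh s)) := by
      rw [← exp_add]
      exact exp_le_exp.2 (by nlinarith)
    have h3 : Real.cosh s * exp (-(δ * Real.cosh s)) ≤ δ⁻¹ := by
      rw [exp_neg, ← div_eq_mul_inv, div_le_iff₀ (exp_pos _), inv_mul_eq_div, le_div_iff₀ hδ]
      linarith
    calc exp (-v.re * Real.cosh s) * Real.cosh s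
        ≤ exp (-δ * Real.cosh s) * exp (-(δ * Real.cosh s)) * Real.cosh s := by gcongr
      _ = exp (-δ * Real.cosh s) * (Real.cosh s * exp (-(δ * Real.cosh s))) := by ring
      _ ≤ exp (-δ * Real.cosh s) * δ⁻¹ := by gcongr
      _ = δ⁻¹ * exp (-δ * Real.cosh s) := mul_comm _ _

/-- Differentiation of a normally convergent series of holomorphic maps on a ball. -/
theorem hasFDerivAt_tsum_of_differentiableOn_ball {ι E F : Type*} [NormedAddCommGroup E]
    [NormedSpace ℂ E] [NormedAddCommGroup F] [NormedSpace ℂ F] [CompleteSpace F]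
    {f : ι → E → F} {c : E} {ρ : ℝ} (hρ : 0 < ρ) {u : ι → ℝ} (hu : Summable u)
    (hf : ∀ i, DifferentiableOn ℂ (f i) (Metric.ball c ρ))
    (hfu : ∀ i, ∀ z ∈ Metric.ball c ρ, ‖f i z‖ ≤ u i) :
    (∀ i, ∀ z ∈ Metric.ball c (ρ / 2), ‖fderiv ℂ (f i) z‖ ≤ 4 / ρ * u i) ∧
    ∀ z ∈ Metric.ball c (ρ / 2),
      HasFDerivAt (fun y => ∑' i, f i y) (∑' i, fderiv ℂ (f i) z) z := by
  have hsub : ∀ z ∈ Metric.ball c (ρ / 2), Metric.ball z (ρ / 2) ⊆ Metric.ball c ρ := by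
    intro z hz
    refine Metric.ball_subset_ball' ?_
    rw [Metric.mem_ball] at hz
    linarith
  have hb : ∀ i, ∀ z ∈ Metric.ball c (ρ / 2), ‖fderiv ℂ (f i) z‖ ≤ 4 / ρ * u i := by
    intro i z hz
    have hz' := hfu i z (hsub z hz (Metric.mem_ball_self (by positivity)))
    have h := Complex.norm_fderiv_le_div_of_mapsTo_ball (R₂ := 2 * u i) ((hf i).mono (hsub z hz))
      (fun y hy => ?_) (by positivity)
    · refine h.trans_eq ?_
      field_simp
      ring
    · rw [mem_closedBall_iff_norm]
      linarith [norm_sub_le (f i y) (f i z), hfu i y (hsub z hz hy)]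
  have hsub' : Metric.ball c (ρ / 2) ⊆ Metric.ball c ρ := Metric.ball_subset_ball (by linarith)
  refine ⟨hb, fun z hz => ?_⟩
  refine hasFDerivAt_tsum_of_isPreconnected (hu.mul_left (4 / ρ)) Metric.isOpen_ball
    (convex_ball c (ρ / 2)).isPreconnected (fun i y hy => ?_) hb hz
    (Summable.of_norm_bounded hu fun i => hfu i z (hsub' hz)) hz
  exact ((hf i).differentiableAt (Metric.isOpen_ball.mem_nhds (hsub' hy))).hasFDerivAt

/-- The holomorphic extension of `(z, t) ↦ K₀(|m| r) e^{imt}` to a neighbourhood in `ℂ³`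
of the set `r ≥ 2`. -/
def besselMode (m : ℤ) (z : Fin 3 → ℂ) : ℂ :=
  complexBesselK0 ((|(m : ℝ)| : ℝ) * (z 0 ^ 2 + z 1 ^ 2) ^ (2⁻¹ : ℂ)) *
    Complex.exp (Complex.I * (m : ℂ) * z 2)

/-- The inclusion of `ℝ³` in `ℂ³`. -/
def complexify : E3 →L[ℝ] (Fin 3 → ℂ) :=
  ContinuousLinearMap.pi fun i => Complex.ofRealCLM.comp (EuclideanSpace.proj i)

theorem complexify_apply (x : E3) (i : Fin 3) : complexify x i = (x i : ℂ) := rfl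

theorem besselMode_complexify (m : ℤ) (x : E3) :
    besselMode m (complexify x) = ((besselK0 (|(m : ℝ)| * radius x) : ℝ) : ℂ) *
      Complex.exp (Complex.I * (m : ℂ) * ((x 2 : ℝ) : ℂ)) := by
  have h : ((x 0 : ℂ) ^ 2 + (x 1 : ℂ) ^ 2) ^ (2⁻¹ : ℂ) = (radius x : ℂ) := by
    rw [radius, sqrt_eq_rpow, Complex.ofReal_cpow (by positivity)]
    push_cast
    norm_num
  simp only [besselMode, complexify_apply]
  rw [h, ← complexBesselK0_ofReal]
  push_cast
  rfl

theorem norm_sq_add_sq_sub_le {x : E3} (hx : 2 ≤ radius x) {z : Fin 3 → ℂ}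
    (hz : z ∈ Metric.ball (complexify x) (1 / 4)) :
    ‖z 0 ^ 2 + z 1 ^ 2 - (radius x : ℂ) ^ 2‖ ≤ radius x := by
  rw [mem_ball_iff_norm] at hz
  have h0 : ‖z 0 - (x 0 : ℂ)‖ ≤ 1 / 4 :=
    (norm_le_pi_norm (z - complexify x) 0).trans hz.le
  have h1 : ‖z 1 - (x 1 : ℂ)‖ ≤ 1 / 4 :=
    (norm_le_pi_norm (z - complexify x) 1).trans hz.le
  have hr : radius x ^ 2 = x 0 ^ 2 + x 1 ^ 2 := sq_sqrt (by positivity)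
  have hr' : (radius x : ℂ) ^ 2 = (x 0 : ℂ) ^ 2 + (x 1 : ℂ) ^ 2 := by exact_mod_cast hr
  have e : z 0 ^ 2 + z 1 ^ 2 - (radius x : ℂ) ^ 2 =
      (2 * (x 0 : ℂ) * (z 0 - x 0) + (z 0 - x 0) ^ 2) +
        (2 * (x 1 : ℂ) * (z 1 - x 1) + (z 1 - x 1) ^ 2) := by
    rw [hr']
    ring
  have hterm : ∀ (a : ℝ) (b : ℂ), ‖b‖ ≤ 1 / 4 → ‖2 * (a : ℂ) * b + b ^ 2‖ ≤ |a| / 2 + 1 / 16 := by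
    intro a b hb
    refine (norm_add_le _ _).trans ?_
    rw [norm_mul, norm_mul, norm_pow, Complex.norm_real, Complex.norm_ofNat, Real.norm_eq_abs]
    have := norm_nonneg b
    have := abs_nonneg a
    nlinarith
  have hsum : |x 0| + |x 1| ≤ 3 / 2 * radius x := by
    refine abs_le_of_sq_le_sq' ?_ (by linarith) |>.2
    nlinarith [sq_nonneg (|x 0| - |x 1|), sq_abs (x 0), sq_abs (x 1)]
  rw [e]
  refine (norm_add_le _ _).trans ?_
  have := hterm (x 0) _ h0
  have := hterm (x 1) _ h1
  linarith

theorem re_sq_add_sq_pos {x : E3} (hx : 2 ≤ radius x) {z : Fin 3 → ℂ}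
    (hz : z ∈ Metric.ball (complexify x) (1 / 4)) : 0 < (z 0 ^ 2 + z 1 ^ 2).re := by
  have h := (abs_le.1 ((Complex.abs_re_le_norm _).trans (norm_sq_add_sq_sub_le hx hz))).1
  rw [Complex.sub_re, ← Complex.ofReal_pow, Complex.ofReal_re] at h
  nlinarith

theorem radius_sub_one_le_re {x : E3} (hx : 2 ≤ radius x) {z : Fin 3 → ℂ}
    (hz : z ∈ Metric.ball (complexify x) (1 / 4)) :
    radius x - 1 ≤ ((z 0 ^ 2 + z 1 ^ 2) ^ (2⁻¹ : ℂ)).re := by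
  set w := (z 0 ^ 2 + z 1 ^ 2) ^ (2⁻¹ : ℂ) with hw
  have hw0 : 0 ≤ w.re := by
    rw [hw, Complex.cpow_inv_two_re]
    exact sqrt_nonneg _
  have hw2 : w ^ 2 = z 0 ^ 2 + z 1 ^ 2 := by
    have h := Complex.cpow_nat_inv_pow (z 0 ^ 2 + z 1 ^ 2) two_ne_zero
    rwa [Nat.cast_ofNat] at h
  have h := norm_sq_add_sq_sub_le hx hz
  rw [← hw2, show w ^ 2 - (radius x : ℂ) ^ 2 = (w + radius x) * (w - radius x) by ring,
    norm_mul] at h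
  have h1 : radius x ≤ ‖w + radius x‖ := by
    refine le_trans ?_ (Complex.re_le_norm _)
    simpa using hw0
  have h2 : ‖w - radius x‖ ≤ 1 := by
    by_contra! hlt
    nlinarith
  have h3 := (abs_le.1 ((Complex.abs_re_le_norm _).trans h2)).1
  rw [Complex.sub_re, Complex.ofReal_re] at h3
  linarith

theorem one_le_abs_intCast {m : ℤ} (hm : m ≠ 0) : 1 ≤ |(m : ℝ)| := by
  exact_mod_cast Int.one_le_abs hm

theorem contDiffOn_besselMode {m : ℤ} (hm : m ≠ 0) {x : E3} (hx : 2 ≤ radius x) :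
    ContDiffOn ℂ 2 (besselMode m) (Metric.ball (complexify x) (1 / 4)) := by
  have hopen : IsOpen {q : ℂ | 0 < q.re} := isOpen_lt continuous_const Complex.continuous_re
  have h1 : DifferentiableOn ℂ
      (fun q : ℂ => complexBesselK0 ((|(m : ℝ)| : ℝ) * q ^ (2⁻¹ : ℂ))) {q | 0 < q.re} := by
    refine DifferentiableOn.comp (g := complexBesselK0)
      (f := fun q : ℂ => (|(m : ℝ)| : ℝ) * q ^ (2⁻¹ : ℂ)) differentiableOn_complexBesselK0 ?_ ?_
    · intro q hq
      have : q ∈ Complex.slitPlane := Or.inl hq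
      exact ((differentiableAt_id.cpow_const this).const_mul _).differentiableWithinAt
    · intro q hq
      have hq : 0 < q.re := hq
      have := one_le_abs_intCast hm
      change 0 < ((|(m : ℝ)| : ℝ) * q ^ (2⁻¹ : ℂ)).re
      rw [Complex.re_ofReal_mul, Complex.cpow_inv_two_re]
      have : 0 ≤ ‖q‖ := norm_nonneg q
      positivity
  have h2 : ContDiffOn ℂ 2 (fun z : Fin 3 → ℂ => z 0 ^ 2 + z 1 ^ 2)
      (Metric.ball (complexify x) (1 / 4)) := by
    fun_prop
  refine ((h1.contDiffOn hopen).comp h2 fun z hz => re_sq_add_sq_pos hx hz).mul ?_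
  fun_prop

theorem norm_besselMode_le {m : ℤ} (hm : m ≠ 0) {x : E3} (hx : 2 ≤ radius x) {z : Fin 3 → ℂ}
    (hz : z ∈ Metric.ball (complexify x) (1 / 4)) :
    ‖besselMode m z‖ ≤
      besselK0 (1 / 2) * exp (5 / 2) * exp (-radius x) * exp (-(3 / 4) * |(m : ℝ)|) := by
  have hm1 := one_le_abs_intCast hm
  have hw := radius_sub_one_le_re hx hz
  have h2 : ‖z 2 - (x 2 : ℂ)‖ ≤ 1 / 4 := by
    rw [mem_ball_iff_norm] at hz
    exact (norm_le_pi_norm (z - complexify x) 2).trans hz.le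
  have him : |(z 2).im| ≤ 1 / 4 := by
    have := (Complex.abs_im_le_norm _).trans h2
    simpa using this
  set w := (z 0 ^ 2 + z 1 ^ 2) ^ (2⁻¹ : ℂ) with hwdef
  have hK : ‖complexBesselK0 ((|(m : ℝ)| : ℝ) * w)‖ ≤
      exp (-(|(m : ℝ)| * w.re - 1 / 2)) * besselK0 (1 / 2) := by
    refine (norm_complexBesselK0_le _).trans ?_
    rw [Complex.re_ofReal_mul]
    exact besselK0_le_exp_mul (by norm_num) (by nlinarith)
  have hE : ‖Complex.exp (Complex.I * (m : ℂ) * z 2)‖ ≤ exp (|(m : ℝ)| / 4) := by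
    rw [Complex.norm_exp]
    refine exp_le_exp.2 ?_
    have e : (Complex.I * (m : ℂ) * z 2).re = -(m * (z 2).im) := by
      simp [Complex.mul_re]
    rw [e]
    refine (neg_le_abs _).trans ?_
    rw [abs_mul]
    nlinarith
  rw [besselMode, norm_mul]
  calc _ ≤ exp (-(|(m : ℝ)| * w.re - 1 / 2)) * besselK0 (1 / 2) * exp (|(m : ℝ)| / 4) := by
        have := besselK0_nonneg (1 / 2)
        gcongr
    _ = besselK0 (1 / 2) * exp (-(|(m : ℝ)| * w.re - 1 / 2) + |(m : ℝ)| / 4) := by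
        rw [exp_add]
        ring
    _ ≤ besselK0 (1 / 2) * exp (5 / 2 + -radius x + -(3 / 4) * |(m : ℝ)|) := by
        refine mul_le_mul_of_nonneg_left (exp_le_exp.2 ?_) (besselK0_nonneg _)
        nlinarith [mul_le_mul_of_nonneg_left hw (abs_nonneg (m : ℝ)),
          mul_nonneg (sub_nonneg.2 hm1) (sub_nonneg.2 hx)]
    _ = _ := by
        rw [exp_add, exp_add]
        ring

theorem summable_exp_neg_mul_abs_int {c : ℝ} (hc : 0 < c) :
    Summable fun m : ℤ => exp (-c * |(m : ℝ)|) := by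
  have h : Summable fun n : ℕ => exp (-c * (n : ℝ)) := by
    simpa [mul_comm] using Real.summable_exp_nat_mul_of_ge (c := -c) (by linarith)
      (f := fun n => (n : ℝ)) (fun n => le_rfl)
  exact Summable.of_nat_of_neg (by simpa using h) (by simpa using h)

/-- Bounds on the derivatives of order at most two of the sum of the Bessel modes. -/
theorem exists_hasFDerivAt_tsum_besselMode :
    ∃ C > 0, ∀ x : E3, 2 ≤ radius x →
      ‖∑' m : {m : ℤ // m ≠ 0}, besselMode m (complexify x)‖ ≤ C * exp (-radius x) ∧
      ∃ (H' : (Fin 3 → ℂ) → (Fin 3 → ℂ) →L[ℂ] ℂ)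
        (H'' : (Fin 3 → ℂ) →L[ℂ] (Fin 3 → ℂ) →L[ℂ] ℂ),
        (∀ᶠ z in 𝓝 (complexify x),
          HasFDerivAt (fun z => ∑' m : {m : ℤ // m ≠ 0}, besselMode m z) (H' z) z) ∧
        HasFDerivAt H' H'' (complexify x) ∧
        ‖H' (complexify x)‖ ≤ C * exp (-radius x) ∧ ‖H''‖ ≤ C * exp (-radius x) := by
  set v : {m : ℤ // m ≠ 0} → ℝ := fun m => exp (-(3 / 4) * |((m : ℤ) : ℝ)|) with hv
  have hvs : Summable v :=
    (summable_exp_neg_mul_abs_int (c := 3 / 4) (by norm_num)).comp_injective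
      Subtype.val_injective
  set A := besselK0 (1 / 2) * exp (5 / 2) with hA
  have hA0 : 0 ≤ A := mul_nonneg (besselK0_nonneg _) (exp_pos _).le
  set S := ∑' m, v m with hS
  have hS0 : 0 ≤ S := tsum_nonneg fun m => (exp_pos _).le
  refine ⟨1 + 512 * (A * S), by positivity, fun x hx => ?_⟩
  set c := complexify x with hc
  have hAS : 0 ≤ A * S := by positivity
  have hbd : ∀ a : ℝ, 0 ≤ a → a ≤ 512 →
      a * (A * exp (-radius x) * S) ≤ (1 + 512 * (A * S)) * exp (-radius x) := by
    intro a ha ha'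
    have : a * (A * S) ≤ 1 + 512 * (A * S) := by nlinarith
    calc a * (A * exp (-radius x) * S) = a * (A * S) * exp (-radius x) := by ring
      _ ≤ _ := by gcongr
  set u : {m : ℤ // m ≠ 0} → ℝ := fun m => A * exp (-radius x) * v m with hu
  have hus : HasSum u (A * exp (-radius x) * S) := hvs.hasSum.mul_left _
  have hcd : ∀ m : {m : ℤ // m ≠ 0}, ContDiffOn ℂ 2 (besselMode m) (Metric.ball c (1 / 4)) :=
    fun m => contDiffOn_besselMode m.2 hx
  have hle : ∀ m : {m : ℤ // m ≠ 0}, ∀ z ∈ Metric.ball c (1 / 4), ‖besselMode m z‖ ≤ u m :=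
    fun m z hz => norm_besselMode_le m.2 hx hz
  obtain ⟨hle1, hd1⟩ := hasFDerivAt_tsum_of_differentiableOn_ball (ρ := 1 / 4) (by norm_num)
    hus.summable (fun m => (hcd m).differentiableOn (by norm_num)) hle
  have hcd1 : ∀ m : {m : ℤ // m ≠ 0},
      DifferentiableOn ℂ (fderiv ℂ (besselMode m)) (Metric.ball c (1 / 4 / 2)) := fun m =>
    (((hcd m).fderiv_of_isOpen (m := 1) Metric.isOpen_ball (by norm_num)).differentiableOn
      (by norm_num)).mono (Metric.ball_subset_ball (by norm_num))
  obtain ⟨hle2, hd2⟩ := hasFDerivAt_tsum_of_differentiableOn_ball (ρ := 1 / 4 / 2) (by norm_num)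
    (hus.summable.mul_left _) hcd1 hle1
  have hus1 := hus.mul_left (4 / (1 / 4))
  have hus2 := hus1.mul_left (4 / (1 / 4 / 2))
  refine ⟨?_, fun z => ∑' m : {m : ℤ // m ≠ 0}, fderiv ℂ (besselMode m) z, _, ?_,
    hd2 c (Metric.mem_ball_self (by norm_num)), ?_, ?_⟩
  · refine (tsum_of_norm_bounded hus fun m => hle m c (Metric.mem_ball_self (by norm_num))).trans ?_
    simpa using hbd 1 (by norm_num) (by norm_num)
  · filter_upwards [Metric.ball_mem_nhds c (by norm_num : (0 : ℝ) < 1 / 4 / 2)] with z hz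
      using hd1 z hz
  · refine (tsum_of_norm_bounded hus1 fun m =>
      hle1 m c (Metric.mem_ball_self (by norm_num))).trans ?_
    exact hbd (4 / (1 / 4)) (by norm_num) (by norm_num)
  · refine (tsum_of_norm_bounded hus2 fun m =>
      hle2 m c (Metric.mem_ball_self (by norm_num))).trans ?_
    rw [← mul_assoc]
    exact hbd _ (by norm_num) (by norm_num)

/-- Restriction of a complex covector on `ℂ³` to `ℝ³`, followed by a real-linear functional. -/
def restrictCovector (A : ℂ →L[ℝ] ℝ) : ((Fin 3 → ℂ) →L[ℂ] ℂ) →L[ℝ] (E3 →L[ℝ] ℝ) :=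
  ((ContinuousLinearMap.compL ℝ E3 (Fin 3 → ℂ) ℝ).flip complexify).comp
    ((ContinuousLinearMap.compL ℝ (Fin 3 → ℂ) ℂ ℝ A).comp
      (ContinuousLinearMap.restrictScalarsL ℂ (Fin 3 → ℂ) ℂ ℝ ℝ))

theorem restrictCovector_apply (A : ℂ →L[ℝ] ℝ) (L : (Fin 3 → ℂ) →L[ℂ] ℂ) :
    restrictCovector A L = (A.comp (L.restrictScalars ℝ)).comp complexify := rfl

theorem norm_iteratedFDeriv_le_of_eventuallyEq {F : E3 → ℝ} {x : E3} (A : ℂ →L[ℝ] ℝ)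
    {H : (Fin 3 → ℂ) → ℂ} {H' : (Fin 3 → ℂ) → (Fin 3 → ℂ) →L[ℂ] ℂ}
    {H'' : (Fin 3 → ℂ) →L[ℂ] (Fin 3 → ℂ) →L[ℂ] ℂ} {B : ℝ}
    (hF : F =ᶠ[𝓝 x] fun y => A (H (complexify y)))
    (hH : ∀ᶠ z in 𝓝 (complexify x), HasFDerivAt H (H' z) z)
    (hH' : HasFDerivAt H' H'' (complexify x))
    (h0 : ‖H (complexify x)‖ ≤ B) (h1 : ‖H' (complexify x)‖ ≤ B) (h2 : ‖H''‖ ≤ B)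
    {k : ℕ} (hk : k ≤ 2) :
    ‖iteratedFDeriv ℝ k F x‖ ≤
      (‖A‖ + ‖restrictCovector A‖ + ‖restrictCovector A‖ * ‖complexify‖) * B := by
  have hB : 0 ≤ B := (norm_nonneg _).trans h0
  have hfd : fderiv ℝ F =ᶠ[𝓝 x] fun y => restrictCovector A (H' (complexify y)) := by
    have hcont : Tendsto complexify (𝓝 x) (𝓝 (complexify x)) := complexify.continuous.tendsto x
    refine hF.fderiv.trans ?_
    filter_upwards [hcont.eventually hH] with y hy
    rw [restrictCovector_apply]
    exact ((A.hasFDerivAt.comp _ (hy.restrictScalars ℝ)).comp y complexify.hasFDerivAt).fderiv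
  have hP : 0 ≤ ‖restrictCovector A‖ * ‖complexify‖ := by positivity
  interval_cases k
  · rw [norm_iteratedFDeriv_zero, hF.eq_of_nhds]
    refine (A.le_opNorm_of_le h0).trans ?_
    gcongr
    linarith [norm_nonneg (restrictCovector A)]
  · rw [norm_iteratedFDeriv_one, hfd.eq_of_nhds]
    refine ((restrictCovector A).le_opNorm_of_le h1).trans ?_
    gcongr
    linarith [norm_nonneg A]
  · rw [← norm_iteratedFDeriv_fderiv, norm_iteratedFDeriv_one, hfd.fderiv_eq]
    have hd : HasFDerivAt (fun y => restrictCovector A (H' (complexify y)))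
        (((restrictCovector A).comp (H''.restrictScalars ℝ)).comp complexify) x :=
      ((restrictCovector A).hasFDerivAt.comp _ (hH'.restrictScalars ℝ)).comp x
        complexify.hasFDerivAt
    rw [hd.fderiv]
    calc _ ≤ ‖restrictCovector A‖ * ‖H''.restrictScalars ℝ‖ * ‖complexify‖ :=
          (ContinuousLinearMap.opNorm_comp_le _ _).trans (by
            gcongr
            exact ContinuousLinearMap.opNorm_comp_le _ _)
      _ ≤ ‖restrictCovector A‖ * B * ‖complexify‖ := by
          rw [ContinuousLinearMap.norm_restrictScalars]
          gcongr
      _ = ‖restrictCovector A‖ * ‖complexify‖ * B := by ring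
      _ ≤ _ := by
          gcongr
          linarith [norm_nonneg A, norm_nonneg (restrictCovector A)]

theorem continuous_radius : Continuous radius := by
  unfold radius
  fun_prop

/-- For `z ≠ 0` the periodic Green's function satisfies
`G(z,t) = (1/2π) log r − (1/2π) Σ_{m≠0} K₀(|m| r) e^{imt}`; consequently there is `C > 0`
with `|∇^k (G − (1/2π) log r)| ≤ C e^{−r}` for all `r ≥ 2` and `k = 0, 1, 2`. -/
theorem green_function_bessel_expansion
    (G : E3 → ℝ)
    (hG : ∀ x : E3, (∀ k : ℤ, x ≠ singPt k) → HasSum (fun m : ℤ => gTerm m x) (G x)) :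
    (∀ x : E3, radius x ≠ 0 →
      HasSum (fun m : {m : ℤ // m ≠ 0} =>
          ((besselK0 (|((m : ℤ) : ℝ)| * radius x) : ℝ) : ℂ) *
            Complex.exp (Complex.I * ((m : ℤ) : ℂ) * ((x 2 : ℝ) : ℂ)))
        (((Real.log (radius x) : ℝ) : ℂ) - 2 * Real.pi * ((G x : ℝ) : ℂ))) ∧
    ∃ C > 0, ∀ x : E3, 2 ≤ radius x → ∀ k : ℕ, k ≤ 2 →
      ‖iteratedFDeriv ℝ k (fun y => G y - Real.log (radius y) / (2 * Real.pi)) x‖ ≤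
        C * Real.exp (-(radius x)) := by
  have hexp : ∀ x : E3, radius x ≠ 0 →
      HasSum (fun m : {m : ℤ // m ≠ 0} =>
          ((besselK0 (|((m : ℤ) : ℝ)| * radius x) : ℝ) : ℂ) *
            Complex.exp (Complex.I * ((m : ℤ) : ℂ) * ((x 2 : ℝ) : ℂ)))
        (((Real.log (radius x) : ℝ) : ℂ) - 2 * Real.pi * ((G x : ℝ) : ℂ)) := by
    intro x hx
    have h := hasSum_besselK0_mul_cexp (r := radius x)
      (lt_of_le_of_ne (sqrt_nonneg _) hx.symm) (x 2)
    rw [two_mul_tsum_besselK0_mul_cos hG hx] at h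
    exact_mod_cast h
  refine ⟨hexp, ?_⟩
  obtain ⟨C, hC, hH⟩ := exists_hasFDerivAt_tsum_besselMode
  set A : ℂ →L[ℝ] ℝ := (-(1 / (2 * π))) • Complex.reCLM with hA
  set D := ‖A‖ + ‖restrictCovector A‖ + ‖restrictCovector A‖ * ‖complexify‖ with hD
  have hD0 : 0 ≤ D := by positivity
  refine ⟨(D + 1) * C, by positivity, fun x hx k hk => ?_⟩
  obtain ⟨h0, H', H'', hH', hH'', h1, h2⟩ := hH x hx
  have hF : (fun y => G y - Real.log (radius y) / (2 * Real.pi)) =ᶠ[𝓝 x]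
      fun y => A (∑' m : {m : ℤ // m ≠ 0}, besselMode m (complexify y)) := by
    filter_upwards [continuous_radius.continuousAt.eventually_ne
      (by linarith : radius x ≠ 0)] with y hy
    simp only [besselMode_complexify]
    rw [(hexp y hy).tsum_eq]
    have e : (((Real.log (radius y) : ℝ) : ℂ) - 2 * Real.pi * ((G y : ℝ) : ℂ)) =
      ((Real.log (radius y) - 2 * π * G y : ℝ) : ℂ) := by push_cast; rfl
    rw [e, hA, _root_.smul_apply, Complex.reCLM_apply, Complex.ofReal_re, smul_eq_mul]
    field_simp
    ring
  refine (norm_iteratedFDeriv_le_of_eventuallyEq A hF hH' hH'' h0 h1 h2 hk).trans ?_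
  rw [mul_assoc]
  exact mul_le_mul_of_nonneg_right (by linarith) (by positivity)

end
end

section
/- Near the singularity the periodic Green's function has a Euclidean Dirac expansion: there is C > 0 with |∇^k( G(z,t) − a₀/2 + 1/(2ρ) )| ≤ C ρ^{2−k} for all (z,t) with ρ = √(r² + t²) < π/2 and k = 0, 1, 2. -/
open Real Filter

noncomputable section

section RegularPart

set_option maxSynthPendingDepth 3

section InverseNorm

variable {E : Type*} [NormedAddCommGroup E] [InnerProductSpace ℝ E]

theorem hasFDerivAt_norm_of_ne_zero {y : E} (hy : y ≠ 0) :
    HasFDerivAt (fun z : E => ‖z‖) (‖y‖⁻¹ • innerSL ℝ y) y := by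
  have h := (hasStrictFDerivAt_norm_sq y).hasFDerivAt.sqrt (by simpa using hy)
  simp only [Real.sqrt_sq (norm_nonneg _)] at h
  convert! h using 1
  ext v
  simp
  ring

variable (E) in
/-- The real inner product as a bilinear continuous map. -/
def innerCLM : E →L[ℝ] E →L[ℝ] ℝ := innerSL ℝ

theorem innerCLM_apply (y : E) : innerCLM E y = innerSL ℝ y := rfl

/-- The derivative of `y ↦ ‖y‖⁻¹`. -/
def invNormDeriv (y : E) : E →L[ℝ] ℝ := (-(‖y‖ ^ 3)⁻¹) • innerSL ℝ y

/-- The second derivative of `y ↦ ‖y‖⁻¹`. -/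
def invNormDerivTwo (y : E) : E →L[ℝ] E →L[ℝ] ℝ :=
  (-(‖y‖ ^ 3)⁻¹) • innerCLM E + ((3 * (‖y‖ ^ 5)⁻¹) • innerSL ℝ y).smulRight (innerSL ℝ y)

theorem hasFDerivAt_inv_norm {y : E} (hy : y ≠ 0) :
    HasFDerivAt (fun z : E => ‖z‖⁻¹) (invNormDeriv y) y := by
  have hn : ‖y‖ ≠ 0 := norm_ne_zero_iff.mpr hy
  convert! (hasDerivAt_inv hn).comp_hasFDerivAt y (hasFDerivAt_norm_of_ne_zero hy) using 1
  rw [invNormDeriv, smul_smul]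
  congr 1
  field_simp

theorem hasFDerivAt_invNormDeriv {y : E} (hy : y ≠ 0) :
    HasFDerivAt (invNormDeriv : E → E →L[ℝ] ℝ) (invNormDerivTwo y) y := by
  have hn : ‖y‖ ≠ 0 := norm_ne_zero_iff.mpr hy
  have hc : HasFDerivAt (fun z : E => -(‖z‖ ^ 3)⁻¹) ((3 * (‖y‖ ^ 5)⁻¹) • innerSL ℝ y) y := by
    have hd := (((hasDerivAt_id ‖y‖).pow 3).inv (pow_ne_zero 3 hn)).neg
    convert! hd.comp_hasFDerivAt y (hasFDerivAt_norm_of_ne_zero hy) using 1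
    rw [smul_smul]
    congr 1
    simp
    field_simp
  exact hc.smul (innerCLM E).hasFDerivAt

theorem norm_invNormDeriv_le (y : E) : ‖invNormDeriv y‖ ≤ (‖y‖ ^ 2)⁻¹ := by
  rw [invNormDeriv, norm_smul, innerSL_apply_norm, norm_neg, norm_inv, norm_pow, norm_norm]
  rcases eq_or_ne ‖y‖ 0 with h | h
  · simp [h]
  · exact le_of_eq (by field_simp)

theorem norm_invNormDerivTwo_le (y : E) : ‖invNormDerivTwo y‖ ≤ 4 * (‖y‖ ^ 3)⁻¹ := by
  have hI : ‖innerCLM E‖ ≤ 1 :=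
    ContinuousLinearMap.opNorm_le_bound _ zero_le_one fun v => by
      rw [innerCLM_apply, innerSL_apply_norm, one_mul]
  have h₁ : ‖(-(‖y‖ ^ 3)⁻¹) • innerCLM E‖ ≤ (‖y‖ ^ 3)⁻¹ := by
    rw [norm_smul, norm_neg, norm_inv, norm_pow, norm_norm]
    exact mul_le_of_le_one_right (by positivity) hI
  have h₂ : ‖((3 * (‖y‖ ^ 5)⁻¹) • innerSL ℝ y).smulRight (innerSL ℝ y)‖ ≤ 3 * (‖y‖ ^ 3)⁻¹ := by
    rw [ContinuousLinearMap.norm_smulRight_apply, norm_smul, innerSL_apply_norm,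
      Real.norm_of_nonneg (by positivity)]
    rcases eq_or_ne ‖y‖ 0 with h | h
    · simp [h]
    · exact le_of_eq (by field_simp)
  calc ‖invNormDerivTwo y‖ ≤ (‖y‖ ^ 3)⁻¹ + 3 * (‖y‖ ^ 3)⁻¹ := norm_add_le_of_le h₁ h₂
    _ = 4 * (‖y‖ ^ 3)⁻¹ := by ring

end InverseNorm

theorem norm_singPt (m : ℤ) : ‖singPt m‖ = 2 * |(m : ℝ)| * π := by
  simp [singPt, norm_smul, abs_of_pos Real.pi_pos]

theorem abs_le_norm_sub_singPt {m : ℤ} (hm : m ≠ 0) {y : E3} (hy : ‖y‖ < π / 2) :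
    |(m : ℝ)| ≤ ‖y - singPt m‖ := by
  have h₁ : (1 : ℝ) ≤ |(m : ℝ)| := by exact_mod_cast Int.one_le_abs hm
  have h₂ := norm_sub_norm_le (singPt m) y
  rw [norm_singPt, norm_sub_rev] at h₂
  nlinarith [Real.pi_gt_three]

theorem ne_singPt {y : E3} (hy0 : y ≠ 0) (hy : ‖y‖ < π / 2) (m : ℤ) : y ≠ singPt m := by
  rcases eq_or_ne m 0 with rfl | hm
  · simpa [singPt] using hy0
  · intro h
    have := abs_le_norm_sub_singPt hm hy
    rw [h, sub_self, norm_zero, abs_nonpos_iff, Int.cast_eq_zero] at this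
    exact hm this

theorem gTerm_eq (m : ℤ) (y : E3) : gTerm m y = -(1 / 2) * (‖y - singPt m‖⁻¹ - aCoeff m) := by
  rw [gTerm, EuclideanSpace.norm_eq, Fin.sum_univ_three]
  simp [singPt]

/-- The summands of the Green's function with the one singular at the origin removed. -/
def regTerm (m : ℤ) (y : E3) : ℝ := if m = 0 then 0 else gTerm m y

/-- The derivative of `regTerm`. -/
def regTermDeriv (m : ℤ) (y : E3) : E3 →L[ℝ] ℝ :=
  if m = 0 then 0 else (-(1 / 2) : ℝ) • invNormDeriv (y - singPt m)

/-- The second derivative of `regTerm`. -/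
def regTermDerivTwo (m : ℤ) (y : E3) : E3 →L[ℝ] E3 →L[ℝ] ℝ :=
  if m = 0 then 0 else (-(1 / 2) : ℝ) • invNormDerivTwo (y - singPt m)

theorem sub_singPt_ne_zero {m : ℤ} (hm : m ≠ 0) {y : E3} (hy : ‖y‖ < π / 2) :
    y - singPt m ≠ 0 := by
  have h₁ : 0 < |(m : ℝ)| := by positivity
  exact norm_pos_iff.mp (h₁.trans_le (abs_le_norm_sub_singPt hm hy))

theorem hasFDerivAt_regTerm (m : ℤ) {y : E3} (hy : ‖y‖ < π / 2) :
    HasFDerivAt (regTerm m) (regTermDeriv m y) y := by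
  by_cases hm : m = 0
  · simp only [regTermDeriv, if_pos hm]
    have h : regTerm m = fun _ => 0 := by
      funext z
      simp [regTerm, hm]
    rw [h]
    exact hasFDerivAt_const _ _
  · have h : HasFDerivAt (fun z : E3 => ‖z - singPt m‖⁻¹) (invNormDeriv (y - singPt m)) y :=
      (hasFDerivAt_comp_sub _).mpr (hasFDerivAt_inv_norm (sub_singPt_ne_zero hm hy))
    simp only [regTermDeriv, if_neg hm]
    convert! (h.sub_const (aCoeff m)).const_mul (-(1 / 2)) using 1
    ext z
    simp only [regTerm, if_neg hm, gTerm_eq]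

theorem hasFDerivAt_regTermDeriv (m : ℤ) {y : E3} (hy : ‖y‖ < π / 2) :
    HasFDerivAt (regTermDeriv m) (regTermDerivTwo m y) y := by
  by_cases hm : m = 0
  · simp only [regTermDerivTwo, if_pos hm]
    have h : regTermDeriv m = fun _ => 0 := by
      funext z
      simp [regTermDeriv, hm]
    rw [h]
    exact hasFDerivAt_const _ _
  · have h : HasFDerivAt (fun z : E3 => invNormDeriv (z - singPt m))
        (invNormDerivTwo (y - singPt m)) y :=
      (hasFDerivAt_comp_sub _).mpr (hasFDerivAt_invNormDeriv (sub_singPt_ne_zero hm hy))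
    simp only [regTermDerivTwo, if_neg hm]
    convert! h.const_smul (-(1 / 2) : ℝ) using 1
    funext z
    simp only [regTermDeriv, if_neg hm, Pi.smul_apply]

theorem norm_regTermDeriv_le (m : ℤ) {y : E3} (hy : ‖y‖ < π / 2) :
    ‖regTermDeriv m y‖ ≤ |1 / (m : ℝ) ^ 2| := by
  by_cases hm : m = 0
  · simp [regTermDeriv, hm]
  · have h₀ : 0 < |(m : ℝ)| := by positivity
    have h₁ := abs_le_norm_sub_singPt hm hy
    have h₂ : (‖y - singPt m‖ ^ 2)⁻¹ ≤ (|(m : ℝ)| ^ 2)⁻¹ := by gcongr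
    have h₃ := norm_invNormDeriv_le (y - singPt m)
    have h₄ := norm_nonneg (invNormDeriv (y - singPt m))
    have h₅ : ‖(-(1 / 2) : ℝ)‖ = 1 / 2 := by norm_num
    rw [regTermDeriv, if_neg hm, norm_smul, h₅, one_div ((m : ℝ) ^ 2), abs_inv, abs_pow]
    linarith

theorem norm_regTermDerivTwo_le (m : ℤ) {y : E3} (hy : ‖y‖ < π / 2) :
    ‖regTermDerivTwo m y‖ ≤ 2 * |1 / (m : ℝ) ^ 3| := by
  by_cases hm : m = 0
  · rw [regTermDerivTwo, if_pos hm, norm_zero]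
    positivity
  · have h₀ : 0 < |(m : ℝ)| := by positivity
    have h₁ := abs_le_norm_sub_singPt hm hy
    have h₂ : (‖y - singPt m‖ ^ 3)⁻¹ ≤ (|(m : ℝ)| ^ 3)⁻¹ := by gcongr
    have h₃ := norm_invNormDerivTwo_le (y - singPt m)
    have h₅ : ‖(-(1 / 2) : ℝ)‖ = 1 / 2 := by norm_num
    rw [regTermDerivTwo, if_neg hm, norm_smul, h₅, one_div ((m : ℝ) ^ 3), abs_inv, abs_pow]
    linarith

theorem summable_abs_one_div_int_pow {p : ℕ} (hp : 1 < p) :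
    Summable fun m : ℤ => |1 / (m : ℝ) ^ p| :=
  (Real.summable_one_div_int_pow.mpr hp).abs

theorem regTerm_zero (m : ℤ) : regTerm m 0 = 0 := by
  by_cases hm : m = 0
  · simp [regTerm, hm]
  · simp [regTerm, hm, gTerm_eq, norm_singPt, aCoeff]

theorem regTerm_neg (m : ℤ) (y : E3) : regTerm (-m) (-y) = regTerm m y := by
  have h : -y - singPt (-m) = -(y - singPt m) := by
    simp [singPt, neg_add_eq_sub]
  simp only [regTerm, neg_eq_zero, gTerm_eq, h, norm_neg, aCoeff, Int.cast_neg, abs_neg]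

/-- The regular part of the Green's function near the origin. -/
def regPart (y : E3) : ℝ := ∑' m : ℤ, regTerm m y

/-- The derivative of the regular part. -/
def regPartDeriv (y : E3) : E3 →L[ℝ] ℝ := ∑' m : ℤ, regTermDeriv m y

theorem zero_mem_ball_pi_div_two : (0 : E3) ∈ Metric.ball (0 : E3) (π / 2) :=
  Metric.mem_ball_self (by positivity)

theorem isPreconnected_ball_pi_div_two : IsPreconnected (Metric.ball (0 : E3) (π / 2)) :=
  (convex_ball _ _).isPreconnected

theorem hasFDerivAt_regPart {y : E3} (hy : ‖y‖ < π / 2) :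
    HasFDerivAt regPart (regPartDeriv y) y :=
  hasFDerivAt_tsum_of_isPreconnected (summable_abs_one_div_int_pow one_lt_two) Metric.isOpen_ball
    isPreconnected_ball_pi_div_two
    (fun m _ hz => hasFDerivAt_regTerm m (mem_ball_zero_iff.mp hz))
    (fun m _ hz => norm_regTermDeriv_le m (mem_ball_zero_iff.mp hz))
    zero_mem_ball_pi_div_two (by simpa only [regTerm_zero] using summable_zero)
    (mem_ball_zero_iff.mpr hy)

theorem hasFDerivAt_regPartDeriv {y : E3} (hy : ‖y‖ < π / 2) :
    HasFDerivAt regPartDeriv (∑' m : ℤ, regTermDerivTwo m y) y :=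
  hasFDerivAt_tsum_of_isPreconnected
    ((summable_abs_one_div_int_pow (p := 3) (by norm_num)).mul_left 2) Metric.isOpen_ball
    isPreconnected_ball_pi_div_two
    (fun m _ hz => hasFDerivAt_regTermDeriv m (mem_ball_zero_iff.mp hz))
    (fun m _ hz => norm_regTermDerivTwo_le m (mem_ball_zero_iff.mp hz))
    zero_mem_ball_pi_div_two
    (Summable.of_norm_bounded (summable_abs_one_div_int_pow one_lt_two) fun m =>
      norm_regTermDeriv_le m (mem_ball_zero_iff.mp zero_mem_ball_pi_div_two))
    (mem_ball_zero_iff.mpr hy)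

theorem norm_tsum_regTermDerivTwo_le {y : E3} (hy : ‖y‖ < π / 2) :
    ‖∑' m : ℤ, regTermDerivTwo m y‖ ≤ ∑' m : ℤ, 2 * |1 / (m : ℝ) ^ 3| :=
  tsum_of_norm_bounded (f := fun m => regTermDerivTwo m y)
    ((summable_abs_one_div_int_pow (p := 3) (by norm_num)).mul_left 2).hasSum
    fun m => norm_regTermDerivTwo_le m hy

theorem regPart_zero : regPart 0 = 0 := by
  simp [regPart, regTerm_zero]

theorem regPart_neg (y : E3) : regPart (-y) = regPart y := by
  rw [regPart, regPart, ← (Equiv.neg ℤ).tsum_eq]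
  simp only [Equiv.neg_apply, regTerm_neg]

theorem regPartDeriv_zero : regPartDeriv 0 = 0 := by
  have h := hasFDerivAt_regPart (mem_ball_zero_iff.mp zero_mem_ball_pi_div_two)
  have h₀ : HasFDerivAt regPart (regPartDeriv 0) (-0) := by rwa [neg_zero]
  have h₁ : HasFDerivAt (fun y : E3 => regPart (-y))
      ((regPartDeriv 0).comp (-ContinuousLinearMap.id ℝ E3)) 0 :=
    h₀.comp (0 : E3) (hasFDerivAt_id (𝕜 := ℝ) (0 : E3)).neg
  simp only [regPart_neg] at h₁
  have h₂ := h₁.unique h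
  ext v
  have h₃ := DFunLike.congr_fun h₂ v
  simp at h₃
  simp
  linarith

theorem norm_regPartDeriv_le {C : ℝ}
    (hC : ∀ y : E3, ‖y‖ < π / 2 → ‖∑' m : ℤ, regTermDerivTwo m y‖ ≤ C)
    {x : E3} (hx : ‖x‖ < π / 2) : ‖regPartDeriv x‖ ≤ C * ‖x‖ := by
  have h := (convex_ball (0 : E3) (π / 2)).norm_image_sub_le_of_norm_hasFDerivWithin_le
    (fun y hy => (hasFDerivAt_regPartDeriv (mem_ball_zero_iff.mp hy)).hasFDerivWithinAt)
    (fun y hy => hC y (mem_ball_zero_iff.mp hy))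
    zero_mem_ball_pi_div_two (mem_ball_zero_iff.mpr hx)
  simpa [regPartDeriv_zero] using h

theorem abs_regPart_le {C : ℝ} (hC0 : 0 ≤ C)
    (hC : ∀ y : E3, ‖y‖ < π / 2 → ‖∑' m : ℤ, regTermDerivTwo m y‖ ≤ C)
    {x : E3} (hx : ‖x‖ < π / 2) : ‖regPart x‖ ≤ C * ‖x‖ ^ 2 := by
  have hball : ∀ y ∈ Metric.closedBall (0 : E3) ‖x‖, ‖y‖ < π / 2 := fun y hy =>
    (mem_closedBall_zero_iff.mp hy).trans_lt hx
  have h := (convex_closedBall (0 : E3) ‖x‖).norm_image_sub_le_of_norm_hasFDerivWithin_le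
    (fun y hy => (hasFDerivAt_regPart (hball y hy)).hasFDerivWithinAt)
    (fun y hy => (norm_regPartDeriv_le hC (hball y hy)).trans
      (mul_le_mul_of_nonneg_left (mem_closedBall_zero_iff.mp hy) hC0))
    (Metric.mem_closedBall_self (norm_nonneg x)) (mem_closedBall_zero_iff.mpr le_rfl)
  rw [regPart_zero, sub_zero, sub_zero] at h
  linarith

theorem regPart_eq {G : E3 → ℝ}
    (hG : ∀ x : E3, (∀ k : ℤ, x ≠ singPt k) → HasSum (fun m : ℤ => gTerm m x) (G x))
    {y : E3} (hy0 : y ≠ 0) (hy : ‖y‖ < π / 2) :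
    G y - aCoeff 0 / 2 + 1 / (2 * ‖y‖) = regPart y := by
  have h : HasSum (fun m : ℤ => regTerm m y) (G y - gTerm 0 y) :=
    hasSum_ite_sub_hasSum (hG y (ne_singPt hy0 hy)) 0
  rw [regPart, h.tsum_eq, gTerm_eq]
  simp [singPt]
  ring

end RegularPart

/-- Near the singularity the periodic Green's function has a Euclidean
Dirac expansion: there is `C > 0` with `|∇^k(G(z,t) − a₀/2 + 1/(2ρ))| ≤ C ρ^{2−k}` for all
`(z,t)` with `ρ = √(r² + t²) < π/2` and `k = 0, 1, 2`. -/
theorem green_function_dirac_expansion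
    (G : E3 → ℝ)
    (hG : ∀ x : E3, (∀ k : ℤ, x ≠ singPt k) → HasSum (fun m : ℤ => gTerm m x) (G x)) :
    ∃ C > 0, ∀ x : E3, x ≠ 0 → ‖x‖ < Real.pi / 2 → ∀ k : ℕ, k ≤ 2 →
      ‖iteratedFDeriv ℝ k (fun y : E3 => G y - aCoeff 0 / 2 + 1 / (2 * ‖y‖)) x‖ ≤
        C * ‖x‖ ^ ((2 : ℝ) - k) := by
  set S : ℝ := ∑' m : ℤ, 2 * |1 / (m : ℝ) ^ 3|
  have hS : 0 ≤ S := tsum_nonneg fun m => by positivity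
  refine ⟨S + 1, by positivity, fun x hx0 hx k hk => ?_⟩
  have hbound : ∀ y : E3, ‖y‖ < π / 2 → ‖∑' m : ℤ, regTermDerivTwo m y‖ ≤ S + 1 := fun y hy =>
    (norm_tsum_regTermDerivTwo_le hy).trans (by linarith)
  have hball : ∀ᶠ y in nhds x, ‖y‖ < π / 2 := continuous_norm.continuousAt.eventually_lt_const hx
  have heq : (fun y : E3 => G y - aCoeff 0 / 2 + 1 / (2 * ‖y‖)) =ᶠ[nhds x] regPart := by
    filter_upwards [hball, isOpen_ne.mem_nhds hx0] with y hy hy0 using regPart_eq hG hy0 hy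
  rw [(heq.iteratedFDeriv ℝ k).eq_of_nhds]
  interval_cases k
  · rw [norm_iteratedFDeriv_zero]
    simpa using abs_regPart_le (by linarith) hbound hx
  · rw [norm_iteratedFDeriv_one, (hasFDerivAt_regPart hx).fderiv]
    convert norm_regPartDeriv_le hbound hx using 2
    norm_num
  · have hfderiv : fderiv ℝ regPart =ᶠ[nhds x] regPartDeriv :=
      hball.mono fun y hy => (hasFDerivAt_regPart hy).fderiv
    rw [← norm_iteratedFDeriv_fderiv, norm_iteratedFDeriv_one, hfderiv.fderiv_eq,
      (hasFDerivAt_regPartDeriv hx).fderiv]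
    simpa using hbound x hx

end
end
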